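/- Assume (H4.1) and (H4.2). Let u₁ ∈ Θ be a viscosity subsolution and u₂ ∈ Θ a viscosity supersolution of the Isaacs equation ∂_t w(t,x) + H⁻(t, x, w, Dw, D²w) = 0 on [0,T)×ℝⁿ with terminal condition w(T,x) = Φ(x), x ∈ ℝⁿ. Then u₁(t,x) ≤ u₂(t,x) for all (t,x) ∈ [0,T]×ℝⁿ. -/

import Mathlib

noncomputable section

open scoped RealInnerProductSpace Matrix

attribute [local instance] Matrix.frobeniusNormedAddCommGroup

/-- The Euclidean state space `ℝⁿ`. -/
abbrev Eucl (n : ℕ) := EuclideanSpace ℝ (Fin n)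

/-- Time derivative `∂φ/∂t (t,x)` of a function `φ : ℝ × ℝⁿ → ℝ`. -/
def timeDeriv {n : ℕ} (φ : ℝ → Eucl n → ℝ) (t : ℝ) (x : Eucl n) : ℝ :=
  deriv (fun s => φ s x) t

/-- Spatial gradient `Dφ(t,x) ∈ ℝⁿ`. -/
def spaceGrad {n : ℕ} (φ : ℝ → Eucl n → ℝ) (t : ℝ) (x : Eucl n) : Eucl n :=
  gradient (fun y => φ t y) x

/-- Spatial Hessian `D²φ(t,x)` as an `n × n` matrix. -/
def spaceHess {n : ℕ} (φ : ℝ → Eucl n → ℝ) (t : ℝ) (x : Eucl n) :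
    Matrix (Fin n) (Fin n) ℝ :=
  Matrix.of fun i j =>
    fderiv ℝ (fun y => fderiv ℝ (fun y' => φ t y') y (EuclideanSpace.single j (1 : ℝ))) x
      (EuclideanSpace.single i (1 : ℝ))

/-- The row vector `pᵀσ ∈ ℝᵈ`. -/
def rowMul {n d : ℕ} (p : Eucl n) (M : Matrix (Fin n) (Fin d) ℝ) : Eucl d :=
  (WithLp.equiv 2 (Fin d → ℝ)).symm fun j => ∑ i, p i * M i j

/-- `φ ∈ C³_{l,b}([0,T]×ℝⁿ)`: three times continuously differentiable with all
derivatives of order 1 to 3 bounded. -/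
def IsTestFunction {n : ℕ} (φ : ℝ → Eucl n → ℝ) : Prop :=
  ContDiff ℝ 3 (fun p : ℝ × Eucl n => φ p.1 p.2) ∧
  ∀ i : ℕ, 1 ≤ i → i ≤ 3 →
    ∃ M : ℝ, ∀ p : ℝ × Eucl n,
      ‖iteratedFDeriv ℝ i (fun q : ℝ × Eucl n => φ q.1 q.2) p‖ ≤ M

/-- Viscosity subsolution of `∂_t w + G(t,x,w,Dw,D²w) = 0` on `[0,T)×ℝⁿ`
with terminal condition `w(T,·) = g`. -/
def IsViscositySubsolution {n : ℕ} (T : ℝ)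
    (G : ℝ → Eucl n → ℝ → Eucl n → Matrix (Fin n) (Fin n) ℝ → ℝ)
    (g : Eucl n → ℝ) (w : ℝ → Eucl n → ℝ) : Prop :=
  (∀ x : Eucl n, w T x ≤ g x) ∧
  ∀ φ : ℝ → Eucl n → ℝ, IsTestFunction φ →
    ∀ t ∈ Set.Ico (0 : ℝ) T, ∀ x : Eucl n,
      IsLocalMaxOn (fun p : ℝ × Eucl n => w p.1 p.2 - φ p.1 p.2)
        (Set.Icc (0 : ℝ) T ×ˢ (Set.univ : Set (Eucl n))) (t, x) →
      0 ≤ timeDeriv φ t x + G t x (φ t x) (spaceGrad φ t x) (spaceHess φ t x)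

/-- Viscosity supersolution of `∂_t w + G(t,x,w,Dw,D²w) = 0` on `[0,T)×ℝⁿ`
with terminal condition `w(T,·) = g`. -/
def IsViscositySupersolution {n : ℕ} (T : ℝ)
    (G : ℝ → Eucl n → ℝ → Eucl n → Matrix (Fin n) (Fin n) ℝ → ℝ)
    (g : Eucl n → ℝ) (w : ℝ → Eucl n → ℝ) : Prop :=
  (∀ x : Eucl n, g x ≤ w T x) ∧
  ∀ φ : ℝ → Eucl n → ℝ, IsTestFunction φ →
    ∀ t ∈ Set.Ico (0 : ℝ) T, ∀ x : Eucl n,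
      IsLocalMinOn (fun p : ℝ × Eucl n => w p.1 p.2 - φ p.1 p.2)
        (Set.Icc (0 : ℝ) T ×ˢ (Set.univ : Set (Eucl n))) (t, x) →
      timeDeriv φ t x + G t x (φ t x) (spaceGrad φ t x) (spaceHess φ t x) ≤ 0

/-- Viscosity solution: both a sub- and a supersolution. -/
def IsViscositySolution {n : ℕ} (T : ℝ)
    (G : ℝ → Eucl n → ℝ → Eucl n → Matrix (Fin n) (Fin n) ℝ → ℝ)
    (g : Eucl n → ℝ) (w : ℝ → Eucl n → ℝ) : Prop :=
  IsViscositySubsolution T G g w ∧ IsViscositySupersolution T G g w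

/-- The lower Hamiltonian `H⁻`. -/
def lowerHamiltonian {n d : ℕ} {U V : Type*}
    (b : ℝ → Eucl n → U → V → Eucl n)
    (σ : ℝ → Eucl n → U → V → Matrix (Fin n) (Fin d) ℝ)
    (f : ℝ → Eucl n → ℝ → Eucl d → U → V → ℝ)
    (t : ℝ) (x : Eucl n) (y : ℝ) (p : Eucl n) (X : Matrix (Fin n) (Fin n) ℝ) : ℝ :=
  ⨆ u : U, ⨅ v : V,
    (1 / 2) * Matrix.trace (σ t x u v * (σ t x u v)ᵀ * X)
      + ⟪p, b t x u v⟫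
      + f t x y (rowMul p (σ t x u v)) u v

/-- The upper Hamiltonian `H⁺`. -/
def upperHamiltonian {n d : ℕ} {U V : Type*}
    (b : ℝ → Eucl n → U → V → Eucl n)
    (σ : ℝ → Eucl n → U → V → Matrix (Fin n) (Fin d) ℝ)
    (f : ℝ → Eucl n → ℝ → Eucl d → U → V → ℝ)
    (t : ℝ) (x : Eucl n) (y : ℝ) (p : Eucl n) (X : Matrix (Fin n) (Fin n) ℝ) : ℝ :=
  ⨅ v : V, ⨆ u : U,
    (1 / 2) * Matrix.trace (σ t x u v * (σ t x u v)ᵀ * X)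
      + ⟪p, b t x u v⟫
      + f t x y (rowMul p (σ t x u v)) u v

/-- Membership in the class `Θ` of continuous functions on `[0,T]×ℝⁿ` satisfying the
growth condition `φ(t,x)·exp{−Ã[log((|x|²+1)^{1/2})]²} → 0` as `|x| → ∞`,
uniformly in `t ∈ [0,T]`. -/
def MemTheta {n : ℕ} (T : ℝ) (φ : ℝ → Eucl n → ℝ) : Prop :=
  ContinuousOn (fun p : ℝ × Eucl n => φ p.1 p.2)
      (Set.Icc (0 : ℝ) T ×ˢ (Set.univ : Set (Eucl n))) ∧
  ∃ A : ℝ, 0 < A ∧ ∀ ε > (0 : ℝ), ∃ R : ℝ, ∀ t ∈ Set.Icc (0 : ℝ) T, ∀ x : Eucl n,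
    R ≤ ‖x‖ →
      |φ t x| * Real.exp (-A * (Real.log ((‖x‖ ^ 2 + 1) ^ ((1 : ℝ) / 2))) ^ 2) ≤ ε

/-!
Put `χ(t, x) = exp ((log √(1 + |x|²) + 1)² / (c (t - t₁)))`. On `(t₁, T']` with `T' - t₁` small, `χ`
outgrows the functions of the class `Θ`, and for `c` large it is a strict supersolution of the
sublinear equation governing the difference of two solutions. If `u₁ - u₂ ≤ 2 θ χ` failed for some
`θ > 0`, then for a larger `θ` the functions `u₁ - θ χ` and `u₂ + θ χ` would be ordered on a compact
region and touch at an interior point. Near such a contact the variables are doubled. Instead of the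
theorem on sums for semicontinuous functions, one regularizes both functions by convolution with a
quadratic and perturbs by a linear function and a small multiple of `|x|²`. The convolution is
convex and carries an explicit selection `ζ` of subgradients; Rademacher's theorem, applied to the
resolvent `(id + ζ)⁻¹`, provides second order expansions at points close to the contact. Comparing
the two equations there contradicts the strictness of the barrier. Hence `u₁ ≤ u₂` passes from time
`T'` to times shortly before `T'`, and finitely many steps reach time `0`.
-/

section ConvexAnalysis

open MeasureTheory Filter Topology Asymptotics

variable {E : Type*} [NormedAddCommGroup E] [InnerProductSpace ℝ E]

/-- `ζ z` is a subgradient of `f` at `z` for every `z`; such a selection exists only if `f` is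
convex. -/
def IsSubgradientSelection (f : E → ℝ) (ζ : E → E) : Prop :=
  ∀ z z', f z + ⟪ζ z, z' - z⟫ ≤ f z'

namespace IsSubgradientSelection

variable {f : E → ℝ} {ζ : E → E}

lemma inner_sub_nonneg (hζ : IsSubgradientSelection f ζ) (z z' : E) :
    0 ≤ ⟪ζ z - ζ z', z - z'⟫ := by
  have h₁ := hζ z z'
  have h₂ := hζ z' z
  rw [← neg_sub z z', inner_neg_right] at h₁
  rw [inner_sub_left]
  linarith

lemma antilipschitzWith_id_add (hζ : IsSubgradientSelection f ζ) :
    AntilipschitzWith 1 fun z => z + ζ z := by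
  refine AntilipschitzWith.of_le_mul_dist fun z z' => ?_
  rw [NNReal.coe_one, one_mul, dist_eq_norm, dist_eq_norm, add_sub_add_comm]
  refine le_of_sq_le_sq ?_ (norm_nonneg _)
  rw [norm_add_sq_real, real_inner_comm]
  linarith [hζ.inner_sub_nonneg z z', sq_nonneg ‖ζ z - ζ z'‖]

lemma inner_sub_le_of_le_quadratic (hζ : IsSubgradientSelection f ζ) {z₀ v : E} {K : ℝ}
    (hK : ∀ h, f (z₀ + h) ≤ f z₀ + ⟪v, h⟫ + K * ‖h‖ ^ 2) (h k : E) :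
    ⟪ζ (z₀ + h), k⟫ + ⟪ζ z₀, h⟫ ≤ ⟪v, h + k⟫ + K * ‖h + k‖ ^ 2 := by
  have h₁ := hζ z₀ (z₀ + h)
  have h₂ := hζ (z₀ + h) (z₀ + (h + k))
  rw [add_sub_cancel_left] at h₁
  rw [add_sub_add_left_eq_sub, add_sub_cancel_left] at h₂
  linarith [hK (h + k)]

lemma eq_of_le_quadratic (hζ : IsSubgradientSelection f ζ) {z₀ v : E} {K : ℝ}
    (hK : ∀ h, f (z₀ + h) ≤ f z₀ + ⟪v, h⟫ + K * ‖h‖ ^ 2) : ζ z₀ = v := by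
  have hmin : IsLocalMin (fun k : E => innerSL ℝ (v - ζ z₀) k + K * ‖k‖ ^ 2) 0 :=
    Eventually.of_forall fun k => by
      have := hζ.inner_sub_le_of_le_quadratic hK 0 k
      simp only [add_zero, inner_zero_right, zero_add] at this
      simp only [map_zero, norm_zero, innerSL_apply_apply, inner_sub_left]
      linarith
  have hderiv : HasFDerivAt (fun k : E => innerSL ℝ (v - ζ z₀) k + K * ‖k‖ ^ 2)
      (innerSL ℝ (v - ζ z₀)) 0 := by
    have hsq := (hasStrictFDerivAt_norm_sq (0 : E)).hasFDerivAt.const_mul K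
    rw [map_zero, smul_zero, smul_zero] at hsq
    have hadd := (innerSL ℝ (v - ζ z₀)).hasFDerivAt.add hsq
    rwa [add_zero] at hadd
  have hzero := hmin.hasFDerivAt_eq_zero hderiv
  exact (sub_eq_zero.1 (norm_eq_zero.1 (by rw [← innerSL_apply_norm (𝕜 := ℝ), hzero,
    norm_zero]))).symm

lemma norm_sub_le_of_le_quadratic (hζ : IsSubgradientSelection f ζ) {z₀ : E} {K : ℝ}
    (hK : ∀ h, f (z₀ + h) ≤ f z₀ + ⟪ζ z₀, h⟫ + K * ‖h‖ ^ 2) (hK₀ : 0 ≤ K) (h : E) :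
    ‖ζ (z₀ + h) - ζ z₀‖ ≤ 4 * K * ‖h‖ := by
  set v := ζ (z₀ + h) - ζ z₀ with hv
  rcases eq_or_ne h 0 with rfl | hh
  · simp [hv]
  rcases eq_or_ne v 0 with hv₀ | hv₀
  · rw [hv₀, norm_zero]; positivity
  let k : E := (‖h‖ / ‖v‖) • v
  have hk : ‖k‖ = ‖h‖ := by
    rw [norm_smul, norm_div, norm_norm, norm_norm, div_mul_cancel₀ _ (norm_ne_zero_iff.2 hv₀)]
  have hvk : ⟪v, k⟫ = ‖v‖ * ‖h‖ := by
    rw [inner_smul_right, real_inner_self_eq_norm_sq]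
    field_simp
  have hle : ⟪v, k⟫ ≤ K * ‖h + k‖ ^ 2 := by
    have := hζ.inner_sub_le_of_le_quadratic hK h k
    rw [inner_add_right] at this
    rw [hv, inner_sub_left]
    linarith
  have hhk : ‖h + k‖ ≤ 2 * ‖h‖ := (norm_add_le _ _).trans (by rw [hk, two_mul])
  refine le_of_mul_le_mul_right ?_ (norm_pos_iff.2 hh)
  calc ‖v‖ * ‖h‖ ≤ K * ‖h + k‖ ^ 2 := hvk ▸ hle
    _ ≤ K * (2 * ‖h‖) ^ 2 := by gcongr
    _ = 4 * K * ‖h‖ * ‖h‖ := by ring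

end IsSubgradientSelection

lemma dist_le_of_increment_le {α : Type*} [PseudoMetricSpace α] {ψ : ℝ → α} {e c : ℝ}
    (h : ∀ s ∈ Set.Icc (0 : ℝ) 1, ∀ t ∈ Set.Icc (0 : ℝ) 1, s ≤ t →
      dist (ψ s) (ψ t) ≤ (t - s) * (e + c * (t - s))) : dist (ψ 0) (ψ 1) ≤ e := by
  have hN : ∀ N : ℕ, 0 < N → dist (ψ 0) (ψ 1) ≤ e + c * (1 / N) := by
    intro N hN
    have hN' : (0 : ℝ) < N := by exact_mod_cast hN
    have hstep : ∀ {k : ℕ}, k < N →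
        dist (ψ (k / N)) (ψ ((k + 1 : ℕ) / N)) ≤ 1 / N * (e + c * (1 / N)) := by
      intro k hk
      have hk' : ((k + 1 : ℕ) : ℝ) ≤ N := by exact_mod_cast hk
      have hlt : (k : ℝ) ≤ (k + 1 : ℕ) := by exact_mod_cast k.le_succ
      have hdiff : ((k + 1 : ℕ) : ℝ) / N - k / N = 1 / N := by push_cast; ring
      have := h (k / N) ⟨by positivity, by rw [div_le_one hN']; linarith⟩
        ((k + 1 : ℕ) / N) ⟨by positivity, by rwa [div_le_one hN']⟩ (by gcongr)
      rwa [hdiff] at this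
    have := dist_le_range_sum_of_dist_le (f := fun k : ℕ => ψ (k / N)) N hstep
    simp only [Nat.cast_zero, zero_div, div_self hN'.ne', Finset.sum_const, Finset.card_range,
      nsmul_eq_mul] at this
    rwa [← mul_assoc, mul_one_div_cancel hN'.ne', one_mul] at this
  have hlim : Tendsto (fun N : ℕ => e + c * (1 / (N : ℝ))) atTop (𝓝 (e + c * 0)) :=
    (tendsto_one_div_atTop_nhds_zero_nat.const_mul c).const_add e
  rw [mul_zero, add_zero] at hlim
  exact ge_of_tendsto hlim (eventually_atTop.2 ⟨1, hN⟩)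

namespace IsSubgradientSelection

variable {f : E → ℝ} {ζ : E → E}

lemma abs_sub_le_of_slope (hζ : IsSubgradientSelection f ζ) {z₀ h : E} {a b e : ℝ}
    (hslope : ∀ t ∈ Set.Icc (0 : ℝ) 1, |⟪ζ (z₀ + t • h), h⟫ - a - t * b| ≤ e) :
    |f (z₀ + h) - f z₀ - a - (1 / 2) * b| ≤ e := by
  have hincr := dist_le_of_increment_le (e := e) (c := |b|)
    (ψ := fun t => f (z₀ + t • h) - t * a - (1 / 2) * b * t ^ 2) (by
    intro s hs t ht hst
    have hsub₁ := hζ (z₀ + s • h) (z₀ + t • h)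
    have hsub₂ := hζ (z₀ + t • h) (z₀ + s • h)
    rw [add_sub_add_left_eq_sub, ← sub_smul, inner_smul_right] at hsub₁ hsub₂
    have hts := sub_nonneg.2 hst
    have hslope₁ := mul_le_mul_of_nonneg_left (abs_le.1 (hslope s hs)).1 hts
    have hslope₂ := mul_le_mul_of_nonneg_left (abs_le.1 (hslope t ht)).2 hts
    have hb₁ := mul_le_mul_of_nonneg_left (le_abs_self b) (mul_nonneg hts hts)
    have hb₂ := mul_le_mul_of_nonneg_left (neg_abs_le b) (mul_nonneg hts hts)
    rw [dist_comm, Real.dist_eq, abs_le]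
    constructor <;> nlinarith)
  rw [dist_comm, Real.dist_eq] at hincr
  simp only [one_smul, zero_smul, add_zero] at hincr
  convert hincr using 2
  ring

lemma isLittleO_of_hasFDerivAt (hζ : IsSubgradientSelection f ζ) {z₀ : E} {A : E →L[ℝ] E}
    (hA : HasFDerivAt ζ A z₀) :
    (fun h => f (z₀ + h) - f z₀ - ⟪ζ z₀, h⟫ - (1 / 2) * ⟪A h, h⟫) =o[𝓝 0]
      fun h => ‖h‖ ^ 2 := by
  refine isLittleO_iff.2 fun ε hε => ?_
  obtain ⟨δ, hδ, hball⟩ :=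
    Metric.eventually_nhds_iff.1 ((hasFDerivAt_iff_isLittleO_nhds_zero.1 hA).def hε)
  refine Metric.eventually_nhds_iff.2 ⟨δ, hδ, fun h hh => ?_⟩
  rw [dist_zero_right] at hh
  rw [Real.norm_eq_abs, Real.norm_of_nonneg (sq_nonneg _)]
  refine hζ.abs_sub_le_of_slope fun t ht => ?_
  have hth : ‖t • h‖ ≤ ‖h‖ := by
    rw [norm_smul, Real.norm_of_nonneg ht.1]
    exact mul_le_of_le_one_left (norm_nonneg _) ht.2
  calc |⟪ζ (z₀ + t • h), h⟫ - ⟪ζ z₀, h⟫ - t * ⟪A h, h⟫|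
      = |⟪ζ (z₀ + t • h) - ζ z₀ - A (t • h), h⟫| := by
        simp only [inner_sub_left, map_smul, real_inner_smul_left]
    _ ≤ ‖ζ (z₀ + t • h) - ζ z₀ - A (t • h)‖ * ‖h‖ := abs_real_inner_le_norm _ _
    _ ≤ (ε * ‖h‖) * ‖h‖ := by
        gcongr
        exact (hball (by simpa using hth.trans_lt hh)).trans (by gcongr)
    _ = ε * ‖h‖ ^ 2 := by ring

end IsSubgradientSelection

lemma le_add_inner_of_forall_sub_quadratic_le {f : E → ℝ} {B : E →L[ℝ] E}
    (hB : (B : E →ₗ[ℝ] E).IsSymmetric) {p z₀ : E}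
    (hmax : ∀ z, f z - (1 / 2) * ⟪B z, z⟫ + ⟪p, z⟫
      ≤ f z₀ - (1 / 2) * ⟪B z₀, z₀⟫ + ⟪p, z₀⟫) (h : E) :
    f (z₀ + h) ≤ f z₀ + ⟪B z₀ - p, h⟫ + (1 / 2) * ⟪B h, h⟫ := by
  have hsymm : ⟪B h, z₀⟫ = ⟪B z₀, h⟫ := by rw [real_inner_comm]; exact (hB z₀ h).symm
  have := hmax (z₀ + h)
  rw [map_add, inner_add_left, inner_add_right, inner_add_right, hsymm, inner_add_right] at this
  rw [inner_sub_left]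
  linarith

variable [FiniteDimensional ℝ E]

/-- Rademacher: the exceptional set is null, and so is its image under the Lipschitz map `Q`. -/
lemma exists_small_forall_differentiableWithinAt {S : Set E} {P Q : E → E}
    {C C' : NNReal} (hP : LipschitzOnWith C P S) (hQ : LipschitzOnWith C' Q S) {r : ℝ}
    (hr : 0 < r) : ∃ p : E, ‖p‖ < r ∧ ∀ w ∈ S, Q w = p → DifferentiableWithinAt ℝ P S w := by
  let _ : MeasurableSpace E := borel E
  have _ : BorelSpace E := ⟨rfl⟩
  let μ : Measure E := μH[Module.finrank ℝ E]
  let N : Set E := {w | ¬ (w ∈ S → DifferentiableWithinAt ℝ P S w)}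
  have hN : μ N = 0 := ae_iff.1 hP.ae_differentiableWithinAt_of_mem
  have hNS : N ⊆ S := fun w hw => (Classical.not_imp.1 hw).1
  have hQN : μ (Q '' N) = 0 := by
    have himage := (hQ.mono hNS).hausdorffMeasure_image_le (d := Module.finrank ℝ E)
      (Nat.cast_nonneg _)
    rw [show μH[(Module.finrank ℝ E : ℝ)] N = 0 from hN, mul_zero] at himage
    exact le_antisymm himage zero_le
  obtain ⟨p, hp, hpN⟩ : (Metric.ball (0 : E) r \ Q '' N).Nonempty :=
    Set.sdiff_nonempty.2 fun hsub =>
      (Metric.measure_ball_pos μ 0 hr).ne' (measure_mono_null hsub hQN)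
  refine ⟨p, by simpa using hp, fun w hw hwp => ?_⟩
  by_contra hd
  exact hpN ⟨w, Classical.not_imp.2 ⟨hw, hd⟩, hwp⟩

lemma surjective_of_isLittleO_sub_comp {E' : Type*} [NormedAddCommGroup E'] [NormedSpace ℝ E']
    {L : E' →L[ℝ] E} {g : E → E'} (h : (fun h => h - L (g h)) =o[𝓝 0] fun h => h) :
    Function.Surjective L := by
  suffices (LinearMap.range (L : E' →ₗ[ℝ] E))ᗮ = ⊥ from
    LinearMap.range_eq_top.1 (Submodule.orthogonal_eq_bot_iff.1 this)
  refine (Submodule.eq_bot_iff _).2 fun e he => ?_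
  have horth : ∀ x, ⟪e, L x⟫ = 0 := fun x =>
    Submodule.inner_left_of_mem_orthogonal (LinearMap.mem_range_self _ x) he
  have hlim : Tendsto (fun t : ℝ => t • e) (𝓝 0) (𝓝 0) := by
    simpa using (tendsto_id (x := 𝓝 (0 : ℝ))).smul_const e
  have hsmall : (fun t : ℝ => t * ‖e‖ ^ 2) =o[𝓝 0] fun t : ℝ => t := by
    have hinner : (fun t : ℝ => t * ‖e‖ ^ 2) = fun t : ℝ => ⟪e, t • e - L (g (t • e))⟫ := by
      ext t
      rw [inner_sub_right, horth, inner_smul_right, real_inner_self_eq_norm_sq, sub_zero]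
    rw [hinner]
    exact ((innerSL ℝ e).isBigO_comp _ _).trans_isLittleO <|
      (h.comp_tendsto hlim).trans_isBigO (.of_bound ‖e‖ (.of_forall fun t => by
        rw [Function.comp_apply, norm_smul, mul_comm]))
  have hzero : ‖e‖ ^ 2 = 0 := by
    have hdiv : Tendsto (fun t : ℝ => t * ‖e‖ ^ 2 / t) (𝓝[≠] 0) (𝓝 0) :=
      (hsmall.mono nhdsWithin_le_nhds).tendsto_div_nhds_zero
    refine tendsto_nhds_unique (tendsto_const_nhds.congr' ?_) hdiv
    filter_upwards [self_mem_nhdsWithin] with t ht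
    exact (mul_div_cancel_left₀ _ ht).symm
  simpa using hzero

lemma differentiableAt_of_differentiableWithinAt_leftInverse {w P : E → E}
    (hP : Function.LeftInverse P w) {z₀ : E} {M : ℝ}
    (hM : ∀ h, ‖w (z₀ + h) - w z₀‖ ≤ M * ‖h‖)
    (hd : DifferentiableWithinAt ℝ P (Set.range w) (w z₀)) : DifferentiableAt ℝ w z₀ := by
  obtain ⟨L, hL⟩ := hd
  have hbig : (fun h => w (z₀ + h) - w z₀) =O[𝓝 0] fun h : E => h :=
    .of_bound M (.of_forall hM)
  have hcont : Tendsto (fun h => w (z₀ + h)) (𝓝 0) (𝓝[Set.range w] (w z₀)) := by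
    refine tendsto_nhdsWithin_iff.2 ⟨?_, .of_forall fun h => ⟨_, rfl⟩⟩
    exact tendsto_sub_nhds_zero_iff.1 (hbig.trans_tendsto tendsto_id)
  have hlin : (fun h => h - L (w (z₀ + h) - w z₀)) =o[𝓝 0] fun h => h := by
    refine ((hL.isLittleO.comp_tendsto hcont).trans_isBigO hbig).congr_left fun h => ?_
    simp only [Function.comp_apply, hP (z₀ + h), hP z₀, add_sub_cancel_left]
  have hsurj := surjective_of_isLittleO_sub_comp (g := fun h => w (z₀ + h) - w z₀) hlin
  have hinj := (LinearMap.injective_iff_surjective (f := (L : E →ₗ[ℝ] E))).2 hsurj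
  let Le : E ≃L[ℝ] E :=
    (LinearEquiv.ofBijective (L : E →ₗ[ℝ] E) ⟨hinj, hsurj⟩).toContinuousLinearEquiv
  have hLe : (Le : E →L[ℝ] E) = L := rfl
  have hcont' : Tendsto w (𝓝[Set.univ] z₀) (𝓝[Set.range w] (w z₀)) := by
    rw [nhdsWithin_univ]
    simpa [Function.comp_def] using
      hcont.comp (tendsto_sub_nhds_zero_iff.2 (tendsto_id (x := 𝓝 z₀)))
  exact (hasFDerivWithinAt_univ.1 (.of_local_left_inverse hcont' (hLe ▸ hL) (Set.mem_univ _)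
    (.of_forall hP))).differentiableAt

/-- A form of Jensen's lemma: a maximum of the perturbed function forces the selection to be
Lipschitz at `z₀`, so that it inherits differentiability from the resolvent `(id + ζ)⁻¹`. -/
lemma IsSubgradientSelection.exists_small_differentiableAt {f : E → ℝ} {ζ : E → E}
    (hζ : IsSubgradientSelection f ζ) {B : E →L[ℝ] E} (hB : (B : E →ₗ[ℝ] E).IsSymmetric) {r : ℝ}
    (hr : 0 < r) :
    ∃ p : E, ‖p‖ < r ∧ ∀ z₀,
      (∀ z, f z - (1 / 2) * ⟪B z, z⟫ + ⟪p, z⟫ ≤ f z₀ - (1 / 2) * ⟪B z₀, z₀⟫ + ⟪p, z₀⟫) →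
      ζ z₀ = B z₀ - p ∧ (∀ h, f (z₀ + h) ≤ f z₀ + ⟪ζ z₀, h⟫ + (1 / 2) * ⟪B h, h⟫) ∧
      DifferentiableAt ℝ ζ z₀ := by
  let w : E → E := fun z => z + ζ z
  have hw : AntilipschitzWith 1 w := hζ.antilipschitzWith_id_add
  let P : E → E := Function.invFun w
  have hPw : Function.LeftInverse P w := Function.leftInverse_invFun hw.injective
  have hP : LipschitzOnWith 1 P (Set.range w) := by
    refine lipschitzOnWith_iff_restrict.2 (hw.to_rightInvOn ?_)
    rintro _ ⟨z, rfl⟩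
    exact congrArg w (hPw z)
  have hQ : LipschitzOnWith (‖B‖₊ * 1 + 1 + 1) (fun x => B (P x) + P x - x) (Set.range w) :=
    ((B.lipschitz.comp_lipschitzOnWith hP).add hP).sub LipschitzWith.id.lipschitzOnWith
  obtain ⟨p, hpr, hp⟩ := exists_small_forall_differentiableWithinAt hP hQ hr
  refine ⟨p, hpr, fun z₀ hmax => ?_⟩
  have hupper := le_add_inner_of_forall_sub_quadratic_le hB hmax
  have hquad : ∀ h, (1 / 2) * ⟪B h, h⟫ ≤ (1 / 2) * ‖B‖ * ‖h‖ ^ 2 := by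
    intro h
    have : ⟪B h, h⟫ ≤ ‖B‖ * ‖h‖ * ‖h‖ :=
      (real_inner_le_norm _ _).trans (by gcongr; exact B.le_opNorm h)
    linarith
  have hgrad : ζ z₀ = B z₀ - p :=
    hζ.eq_of_le_quadratic fun h => (hupper h).trans (add_le_add_right (hquad h) _)
  rw [← hgrad] at hupper
  refine ⟨hgrad, hupper, ?_⟩
  have hζlip := hζ.norm_sub_le_of_le_quadratic
    (fun h => (hupper h).trans (add_le_add_right (hquad h) _)) (by positivity)
  have hwlip : ∀ h, ‖w (z₀ + h) - w z₀‖ ≤ (1 + 4 * (1 / 2 * ‖B‖)) * ‖h‖ := fun h => by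
    rw [show w (z₀ + h) - w z₀ = h + (ζ (z₀ + h) - ζ z₀) by simp only [w]; abel, add_mul, one_mul]
    exact (norm_add_le _ _).trans (by gcongr; exact hζlip h)
  have hwdiff := differentiableAt_of_differentiableWithinAt_leftInverse hPw hwlip <|
    hp (w z₀) ⟨z₀, rfl⟩ (by rw [hPw z₀, sub_eq_iff_eq_add]; simp only [w, hgrad]; abel)
  simpa [w] using hwdiff.sub differentiableAt_id

end ConvexAnalysis

section TheoremOnSums

open Filter Topology Asymptotics

variable {E : Type*} [NormedAddCommGroup E] [InnerProductSpace ℝ E]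

/-- The quadratic polynomial on `E` with value `0`, gradient `q` and Hessian `X` at the origin. -/
def quadPoly (q : E) (X : E →L[ℝ] E) (h : E) : ℝ := ⟪q, h⟫ + (1 / 2) * ⟪X h, h⟫

lemma quadPoly_neg (q : E) (X : E →L[ℝ] E) (h : E) : quadPoly (-q) (-X) h = -quadPoly q X h := by
  simp only [quadPoly, neg_apply, inner_neg_left]
  ring

lemma inner_add_smul_id_self (X : E →L[ℝ] E) (c : ℝ) (h : E) :
    ⟪(X + c • ContinuousLinearMap.id ℝ E) h, h⟫ = ⟪X h, h⟫ + c * ‖h‖ ^ 2 := by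
  simp only [add_apply, smul_apply, ContinuousLinearMap.id_apply, inner_add_left,
    real_inner_smul_left, real_inner_self_eq_norm_sq]

/-- `x ↦ f x - ‖x‖² / 2` is the sup-convolution of `u` over `K`, namely
`x ↦ sup_{ξ ∈ K} (u ξ - ‖x - ξ‖² / 2)`, and the supremum is attained at `ζ x`. Adding `‖x‖² / 2`
makes it convex. -/
structure IsSupConvolution {E : Type*} [SeminormedAddCommGroup E] (K : Set E) (u f : E → ℝ)
    (ζ : E → E) : Prop where
  mem : ∀ x, ζ x ∈ K
  eq : ∀ x, f x = u (ζ x) - (1 / 2) * ‖x - ζ x‖ ^ 2 + (1 / 2) * ‖x‖ ^ 2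
  le : ∀ x, ∀ ξ ∈ K, u ξ - (1 / 2) * ‖x - ξ‖ ^ 2 + (1 / 2) * ‖x‖ ^ 2 ≤ f x

lemma exists_isSupConvolution {E : Type*} [SeminormedAddCommGroup E] {K : Set E}
    (hK : IsCompact K) (hne : K.Nonempty) {u : E → ℝ} (hu : ContinuousOn u K) :
    ∃ f ζ, IsSupConvolution K u f ζ := by
  have hmax (x : E) : ∃ ξ ∈ K, IsMaxOn (fun ξ => u ξ - (1 / 2) * ‖x - ξ‖ ^ 2) K ξ :=
    hK.exists_isMaxOn hne (hu.sub (by fun_prop))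
  choose ζ hζ hmax using hmax
  exact ⟨fun x => u (ζ x) - (1 / 2) * ‖x - ζ x‖ ^ 2 + (1 / 2) * ‖x‖ ^ 2, ζ, hζ, fun _ => rfl,
    fun x ξ hξ => add_le_add_left (hmax x hξ) _⟩

namespace IsSupConvolution

variable {K : Set E} {u f : E → ℝ} {ζ : E → E}

lemma isSubgradientSelection (h : IsSupConvolution K u f ζ) : IsSubgradientSelection f ζ := by
  intro x x'
  have := h.le x' _ (h.mem x)
  rw [norm_sub_sq_real, real_inner_comm] at this
  rw [h.eq x, norm_sub_sq_real, inner_sub_right, real_inner_comm x]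
  linarith

lemma eventually_le_quadPoly (h : IsSupConvolution K u f ζ) {x : E} {A : E →L[ℝ] E}
    (hA : HasFDerivAt ζ A x) {r : ℝ} (hr : 0 < r) :
    ∀ᶠ z in 𝓝[K] ζ x, u z ≤ u (ζ x)
      + quadPoly (ζ x - x) (A + (r - 1) • ContinuousLinearMap.id ℝ E) (z - ζ x) := by
  have hexp := (h.isSubgradientSelection.isLittleO_of_hasFDerivAt hA).def (half_pos hr)
  have hlim : Tendsto (fun z => z - ζ x) (𝓝[K] ζ x) (𝓝 0) :=
    tendsto_nhdsWithin_of_tendsto_nhds (tendsto_sub_nhds_zero_iff.2 tendsto_id)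
  filter_upwards [hlim.eventually hexp, self_mem_nhdsWithin] with z hz hzK
  have hle := h.le (x + (z - ζ x)) z hzK
  rw [show x + (z - ζ x) - z = x - ζ x by abel, norm_add_sq_real] at hle
  rw [Real.norm_of_nonneg (sq_nonneg _)] at hz
  have hupper := (le_abs_self _).trans hz
  rw [h.eq x] at hupper
  rw [quadPoly, inner_add_smul_id_self, inner_sub_left _ _ (z - ζ x)]
  linarith

end IsSupConvolution

lemma one_sixth_norm_sub_sq_le {E : Type*} [SeminormedAddCommGroup E] (x y ξ η : E) :
    (1 / 6) * ‖ξ - η‖ ^ 2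
      ≤ (1 / 2) * ‖x - ξ‖ ^ 2 + (1 / 2) * ‖y - η‖ ^ 2 + (1 / 2) * ‖x - y‖ ^ 2 := by
  have htri : ‖ξ - η‖ ≤ ‖x - ξ‖ + ‖x - y‖ + ‖y - η‖ := by
    rw [show ξ - η = -(x - ξ) + (x - y) + (y - η) by abel, ← norm_neg (x - ξ)]
    exact norm_add₃_le
  have hsq : ‖ξ - η‖ ^ 2 ≤ (‖x - ξ‖ + ‖x - y‖ + ‖y - η‖) ^ 2 := by gcongr
  nlinarith [sq_nonneg (‖x - ξ‖ - ‖x - y‖), sq_nonneg (‖x - ξ‖ - ‖y - η‖),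
    sq_nonneg (‖x - y‖ - ‖y - η‖)]

/-- The operator on `E × E` whose quadratic form is `‖x‖² + ‖y‖² + ‖x - y‖²`. -/
def couplingOperator (E : Type*) [NormedAddCommGroup E] [InnerProductSpace ℝ E] :
    WithLp 2 (E × E) →L[ℝ] WithLp 2 (E × E) :=
  ((WithLp.prodContinuousLinearEquiv 2 ℝ E E).symm : E × E →L[ℝ] WithLp 2 (E × E)) ∘L
    ((2 : ℝ) • WithLp.fstL 2 ℝ E E - WithLp.sndL 2 ℝ E E).prod
      ((2 : ℝ) • WithLp.sndL 2 ℝ E E - WithLp.fstL 2 ℝ E E)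

lemma couplingOperator_apply (z : WithLp 2 (E × E)) :
    couplingOperator E z
      = WithLp.toLp 2 ((2 : ℝ) • z.fst - z.snd, (2 : ℝ) • z.snd - z.fst) := rfl

lemma isSymmetric_couplingOperator :
    (couplingOperator E : WithLp 2 (E × E) →ₗ[ℝ] WithLp 2 (E × E)).IsSymmetric := by
  intro z z'
  simp only [ContinuousLinearMap.coe_coe, couplingOperator_apply, WithLp.prod_inner_apply,
    WithLp.ofLp_fst, WithLp.ofLp_snd, inner_sub_left, inner_sub_right, real_inner_smul_left,
    real_inner_smul_right]
  ring

lemma inner_couplingOperator_self (z : WithLp 2 (E × E)) :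
    ⟪couplingOperator E z, z⟫ = ‖z.fst‖ ^ 2 + ‖z.snd‖ ^ 2 + ‖z.fst - z.snd‖ ^ 2 := by
  simp only [couplingOperator_apply, WithLp.prod_inner_apply, WithLp.ofLp_fst, WithLp.ofLp_snd,
    inner_sub_left, real_inner_smul_left, norm_sub_sq_real, real_inner_self_eq_norm_sq,
    real_inner_comm z.fst z.snd]
  ring

lemma norm_toLp_prod_le {E : Type*} [SeminormedAddCommGroup E] (x y : E) :
    ‖WithLp.toLp 2 (x, y)‖ ≤ ‖x‖ + ‖y‖ := by
  refine le_of_sq_le_sq ?_ (by positivity)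
  rw [WithLp.prod_norm_sq_eq_of_L2, WithLp.toLp_fst, WithLp.toLp_snd]
  nlinarith [norm_nonneg x, norm_nonneg y]

lemma nonneg_of_forall_sq_mul_add_isLittleO {c : ℝ} {g : ℝ → ℝ} (hg : g =o[𝓝 0] fun t => t ^ 2)
    (h : ∀ t, 0 ≤ t ^ 2 * c + g t) : 0 ≤ c := by
  have hlim : Tendsto (fun t => c + g t / t ^ 2) (𝓝[≠] 0) (𝓝 (c + 0)) :=
    (hg.mono nhdsWithin_le_nhds).tendsto_div_nhds_zero.const_add c
  rw [add_zero] at hlim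
  refine ge_of_tendsto hlim ?_
  filter_upwards [self_mem_nhdsWithin] with t (ht : t ≠ 0)
  rw [← mul_div_cancel_left₀ c (pow_ne_zero 2 ht), ← add_div]
  exact div_nonneg (h t) (sq_nonneg t)

namespace IsSubgradientSelection

variable {f f₁ f₂ : E → ℝ} {ζ ζ₁ ζ₂ : E → E}

lemma prod (h₁ : IsSubgradientSelection f₁ ζ₁) (h₂ : IsSubgradientSelection f₂ ζ₂) :
    IsSubgradientSelection (fun z : WithLp 2 (E × E) => f₁ z.fst + f₂ z.snd)
      fun z => WithLp.toLp 2 (ζ₁ z.fst, ζ₂ z.snd) := by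
  intro z z'
  have hle₁ := h₁ z.fst z'.fst
  have hle₂ := h₂ z.snd z'.snd
  simp only [WithLp.prod_inner_apply, WithLp.ofLp_fst, WithLp.ofLp_snd, WithLp.sub_fst,
    WithLp.sub_snd]
  linarith

lemma lipschitzWith (hζ : IsSubgradientSelection f ζ) {ρ : NNReal} (hρ : ∀ z, ‖ζ z‖ ≤ ρ) :
    LipschitzWith ρ f := by
  refine LipschitzWith.of_le_add_mul _ fun z z' => ?_
  have hinner : -(ρ * ‖z - z'‖) ≤ ⟪ζ z, z' - z⟫ := by
    rw [← neg_sub z z', inner_neg_right, neg_le_neg_iff]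
    exact (real_inner_le_norm _ _).trans (by gcongr; exact hρ z)
  rw [dist_eq_norm]
  linarith [hζ z z']

lemma exists_max_sub_quadratic [FiniteDimensional ℝ E] (hζ : IsSubgradientSelection f ζ)
    {ρ : NNReal} (hρ : ∀ z, ‖ζ z‖ ≤ ρ) {B : E →L[ℝ] E} (hB : ∀ z, ‖z‖ ^ 2 ≤ ⟪B z, z⟫) (p : E) :
    ∃ z₀, ∀ z, f z - (1 / 2) * ⟪B z, z⟫ + ⟪p, z⟫
      ≤ f z₀ - (1 / 2) * ⟪B z₀, z₀⟫ + ⟪p, z₀⟫ := by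
  have hcont : Continuous fun z => f z - (1 / 2) * ⟪B z, z⟫ + ⟪p, z⟫ := by
    have := (hζ.lipschitzWith hρ).continuous
    fun_prop
  refine hcont.exists_forall_ge' 0 ?_
  filter_upwards [(tendsto_norm_cocompact_atTop (E := E)).eventually_ge_atTop
    (2 * (ρ + ‖p‖))] with z hz
  have hsub := hζ z 0
  rw [zero_sub, inner_neg_right] at hsub
  have hζz : ⟪ζ z, z⟫ ≤ ρ * ‖z‖ := (real_inner_le_norm _ _).trans (by gcongr; exact hρ z)
  have hmul : 2 * (ρ + ‖p‖) * ‖z‖ ≤ ‖z‖ * ‖z‖ := by gcongr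
  simp only [map_zero, inner_zero_right]
  nlinarith [real_inner_le_norm p z, hB z]

lemma isLittleO_line (hζ : IsSubgradientSelection f ζ) {z₀ : E} {A : E →L[ℝ] E}
    (hA : HasFDerivAt ζ A z₀) (h : E) :
    (fun t : ℝ => f (z₀ + t • h) - f z₀ - t * ⟪ζ z₀, h⟫ - t ^ 2 * ((1 / 2) * ⟪A h, h⟫))
      =o[𝓝 0] fun t => t ^ 2 := by
  have hlim : Tendsto (fun t : ℝ => t • h) (𝓝 0) (𝓝 0) := by
    simpa using (tendsto_id (x := 𝓝 (0 : ℝ))).smul_const h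
  refine (((hζ.isLittleO_of_hasFDerivAt hA).comp_tendsto hlim).congr_left fun t => ?_).trans_isBigO
    (.of_bound (‖h‖ ^ 2) (.of_forall fun t => ?_))
  · simp only [Function.comp_apply, map_smul, real_inner_smul_left, real_inner_smul_right]
    ring
  · rw [Function.comp_apply, norm_smul, mul_pow, norm_mul, norm_pow, norm_pow, norm_norm, norm_norm,
      norm_pow, mul_comm]

lemma inner_add_inner_le (h₁ : IsSubgradientSelection f₁ ζ₁)
    (h₂ : IsSubgradientSelection f₂ ζ₂) {x y : E} {A₁ A₂ : E →L[ℝ] E}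
    (hA₁ : HasFDerivAt ζ₁ A₁ x) (hA₂ : HasFDerivAt ζ₂ A₂ y) {b : E → E → ℝ}
    (hb : ∀ t : ℝ, ∀ h k, b (t • h) (t • k) = t ^ 2 * b h k)
    (hle : ∀ h k, f₁ (x + h) + f₂ (y + k)
      ≤ f₁ x + f₂ y + (⟪ζ₁ x, h⟫ + ⟪ζ₂ y, k⟫) + (1 / 2) * b h k) (h k : E) :
    ⟪A₁ h, h⟫ + ⟪A₂ k, k⟫ ≤ b h k := by
  have hrem := ((h₁.isLittleO_line hA₁ h).add (h₂.isLittleO_line hA₂ k)).neg_left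
  have hpos : 0 ≤ (1 / 2) * (b h k - ⟪A₁ h, h⟫ - ⟪A₂ k, k⟫) := by
    refine nonneg_of_forall_sq_mul_add_isLittleO hrem fun t => ?_
    have := hle (t • h) (t • k)
    rw [hb, real_inner_smul_right, real_inner_smul_right] at this
    linarith
  linarith

lemma differentiableAt_of_differentiableAt_prod {ζ₁ ζ₂ : E → E} {x y : E}
    (h : DifferentiableAt ℝ (fun z : WithLp 2 (E × E) => WithLp.toLp 2 (ζ₁ z.fst, ζ₂ z.snd))
      (WithLp.toLp 2 (x, y))) :
    DifferentiableAt ℝ ζ₁ x ∧ DifferentiableAt ℝ ζ₂ y := by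
  have hL := (WithLp.prodContinuousLinearEquiv 2 ℝ E E).symm.differentiableAt (x := (x, y))
  have hcomp := (WithLp.prodContinuousLinearEquiv 2 ℝ E E).differentiableAt.comp (x, y)
    (DifferentiableAt.comp (x, y) h hL)
  exact ⟨hcomp.fst.comp x (f := fun x' => (x', y)) (by fun_prop),
    hcomp.snd.comp y (f := fun y' => (x, y')) (by fun_prop)⟩

lemma exists_max_sub_coupling [FiniteDimensional ℝ E] (h₁ : IsSubgradientSelection f₁ ζ₁)
    (h₂ : IsSubgradientSelection f₂ ζ₂) {ρ : NNReal} (hρ₁ : ∀ x, ‖ζ₁ x‖ ≤ ρ)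
    (hρ₂ : ∀ x, ‖ζ₂ x‖ ≤ ρ) {r : ℝ} (hr : 0 < r) :
    ∃ x y p₁ p₂ : E, ∃ A₁ A₂ : E →L[ℝ] E, ‖p₁‖ ≤ r ∧ ‖p₂‖ ≤ r ∧
      (∀ x' y', f₁ x' + f₂ y' - (1 / 2) * (‖x'‖ ^ 2 + ‖y'‖ ^ 2 + ‖x' - y'‖ ^ 2)
          + (⟪p₁, x'⟫ + ⟪p₂, y'⟫)
        ≤ f₁ x + f₂ y - (1 / 2) * (‖x‖ ^ 2 + ‖y‖ ^ 2 + ‖x - y‖ ^ 2)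
          + (⟪p₁, x⟫ + ⟪p₂, y⟫)) ∧
      ζ₁ x = (2 : ℝ) • x - y - p₁ ∧ ζ₂ y = (2 : ℝ) • y - x - p₂ ∧
      HasFDerivAt ζ₁ A₁ x ∧ HasFDerivAt ζ₂ A₂ y ∧
      ∀ h k, ⟪A₁ h, h⟫ + ⟪A₂ k, k⟫ ≤ ‖h‖ ^ 2 + ‖k‖ ^ 2 + ‖h - k‖ ^ 2 := by
  have hζ := h₁.prod h₂
  have hbound (z : WithLp 2 (E × E)) :
      ‖WithLp.toLp 2 (ζ₁ z.fst, ζ₂ z.snd)‖ ≤ (ρ + ρ : NNReal) :=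
    (norm_toLp_prod_le _ _).trans (add_le_add (hρ₁ _) (hρ₂ _))
  have hge (z : WithLp 2 (E × E)) : ‖z‖ ^ 2 ≤ ⟪couplingOperator E z, z⟫ := by
    rw [inner_couplingOperator_self, WithLp.prod_norm_sq_eq_of_L2]
    exact le_add_of_nonneg_right (sq_nonneg _)
  obtain ⟨p, hp, hdiff⟩ := hζ.exists_small_differentiableAt isSymmetric_couplingOperator hr
  obtain ⟨z, hz⟩ := hζ.exists_max_sub_quadratic hbound hge p
  obtain ⟨hgrad, hquad, hd⟩ := hdiff z hz
  obtain ⟨hd₁, hd₂⟩ := differentiableAt_of_differentiableAt_prod hd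
  refine ⟨z.fst, z.snd, p.fst, p.snd, fderiv ℝ ζ₁ z.fst, fderiv ℝ ζ₂ z.snd,
    (WithLp.norm_fst_le _ _).trans hp.le, (WithLp.norm_snd_le _ _).trans hp.le,
    fun x' y' => ?_, congrArg WithLp.fst hgrad, congrArg WithLp.snd hgrad,
    hd₁.hasFDerivAt, hd₂.hasFDerivAt, ?_⟩
  · have := hz (WithLp.toLp 2 (x', y'))
    rw [inner_couplingOperator_self, inner_couplingOperator_self] at this
    exact this
  · refine h₁.inner_add_inner_le h₂ hd₁.hasFDerivAt hd₂.hasFDerivAt (fun t h k => ?_)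
      fun h k => ?_
    · rw [← smul_sub, norm_smul, norm_smul, norm_smul, mul_pow, mul_pow, mul_pow,
        Real.norm_eq_abs, sq_abs]
      ring
    · have := hquad (WithLp.toLp 2 (h, k))
      rw [inner_couplingOperator_self] at this
      exact this

end IsSubgradientSelection

/-- An approximate maximum point `(ξ, η)` over `K × K` of the doubled function
`(x, y) ↦ u x - v y - ‖J (x - y)‖² / 6`, at which `u` is touched from above and `v` from below by
quadratic polynomials in the variable `J (z - ξ)`, resp. `J (z - η)`, whose gradients `q`, `q'` and
Hessians `X`, `Y` satisfy the matrix inequality of the theorem on sums up to the error `r`. -/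
structure IsDoublingPoint {F : Type*} [NormedAddCommGroup F] [NormedSpace ℝ F] (J : F ≃L[ℝ] E)
    (K : Set F) (u v : F → ℝ) (r : ℝ) (ξ η : F) (q q' : E) (X Y : E →L[ℝ] E) : Prop where
  mem_left : ξ ∈ K
  mem_right : η ∈ K
  sub_le : ∀ z ∈ K, u z - v z ≤ u ξ - v η - (1 / 6) * ‖J (ξ - η)‖ ^ 2 + r
  norm_left_le : ‖q - (1 / 3 : ℝ) • J (ξ - η)‖ ≤ r
  norm_right_le : ‖q' - (1 / 3 : ℝ) • J (ξ - η)‖ ≤ r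
  le_left : ∀ᶠ z in 𝓝[K] ξ, u z ≤ u ξ + quadPoly q X (J (z - ξ))
  le_right : ∀ᶠ z in 𝓝[K] η, v η + quadPoly q' Y (J (z - η)) ≤ v z
  inner_sub_inner_le : ∀ h k, ⟪X h, h⟫ - ⟪Y k, k⟫ ≤ ‖h - k‖ ^ 2 + r * (‖h‖ ^ 2 + ‖k‖ ^ 2)

lemma sub_le_of_max_sub_coupling {K : Set E} {u v f₁ f₂ : E → ℝ} {ζ₁ ζ₂ : E → E}
    (h₁ : IsSupConvolution K u f₁ ζ₁) (h₂ : IsSupConvolution K (-v) f₂ ζ₂) {x y p₁ p₂ : E}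
    (hmax : ∀ x' y', f₁ x' + f₂ y' - (1 / 2) * (‖x'‖ ^ 2 + ‖y'‖ ^ 2 + ‖x' - y'‖ ^ 2)
        + (⟪p₁, x'⟫ + ⟪p₂, y'⟫)
      ≤ f₁ x + f₂ y - (1 / 2) * (‖x‖ ^ 2 + ‖y‖ ^ 2 + ‖x - y‖ ^ 2) + (⟪p₁, x⟫ + ⟪p₂, y⟫))
    {z : E} (hz : z ∈ K) :
    u z - v z ≤ u (ζ₁ x) - v (ζ₂ y) - (1 / 6) * ‖ζ₁ x - ζ₂ y‖ ^ 2
      + (‖p₁‖ * ‖x - z‖ + ‖p₂‖ * ‖y - z‖) := by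
  have hdiag := hmax z z
  have hu := h₁.le z z hz
  have hv := h₂.le z z hz
  have hp₁ := real_inner_le_norm p₁ (x - z)
  have hp₂ := real_inner_le_norm p₂ (y - z)
  rw [inner_sub_right] at hp₁ hp₂
  rw [sub_self, norm_zero] at hdiag hu hv
  rw [h₁.eq x, h₂.eq y] at hdiag
  simp only [Pi.neg_apply] at hdiag hv
  linarith [one_sixth_norm_sub_sq_le x y (ζ₁ x) (ζ₂ y)]

lemma norm_two_thirds_add_one_third_le {x y : E} {s : ℝ} (hx : ‖x‖ ≤ s) (hy : ‖y‖ ≤ s) :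
    ‖(2 / 3 : ℝ) • x + (1 / 3 : ℝ) • y‖ ≤ s := by
  rw [← mem_closedBall_zero_iff] at *
  exact convex_closedBall (0 : E) s hx hy (by norm_num) (by norm_num) (by norm_num)

lemma norm_le_and_norm_sub_le_of_eq_coupling {x y ξ η p p' : E} {ρ s : ℝ}
    (hξ : ξ = (2 : ℝ) • x - y - p) (hη : η = (2 : ℝ) • y - x - p') (hξρ : ‖ξ‖ ≤ ρ)
    (hηρ : ‖η‖ ≤ ρ) (hp : ‖p‖ ≤ s) (hp' : ‖p'‖ ≤ s) :
    ‖x‖ ≤ ρ + s ∧ ‖ξ - x - (1 / 3 : ℝ) • (ξ - η)‖ ≤ s := by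
  constructor
  · rw [show x = (2 / 3 : ℝ) • (ξ + p) + (1 / 3 : ℝ) • (η + p') by rw [hξ, hη]; module]
    exact norm_two_thirds_add_one_third_le (norm_add_le_of_le hξρ hp) (norm_add_le_of_le hηρ hp')
  · rw [show ξ - x - (1 / 3 : ℝ) • (ξ - η) = -((2 / 3 : ℝ) • p + (1 / 3 : ℝ) • p') by
      rw [hξ, hη]; module, norm_neg]
    exact norm_two_thirds_add_one_third_le hp hp'

lemma exists_isDoublingPoint_refl [FiniteDimensional ℝ E] {K : Set E} (hK : IsCompact K)
    (hne : K.Nonempty) {u v : E → ℝ} (hu : ContinuousOn u K) (hv : ContinuousOn v K)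
    {r : ℝ} (hr : 0 < r) :
    ∃ ξ η q q' X Y, IsDoublingPoint (ContinuousLinearEquiv.refl ℝ E) K u v r ξ η q q' X Y := by
  obtain ⟨f₁, ζ₁, h₁⟩ := exists_isSupConvolution hK hne hu
  obtain ⟨f₂, ζ₂, h₂⟩ := exists_isSupConvolution hK hne hv.neg
  obtain ⟨ρ, hρ⟩ : ∃ ρ : NNReal, ∀ z ∈ K, ‖z‖ ≤ ρ :=
    let ⟨C, hC⟩ := hK.isBounded.exists_norm_le
    ⟨C.toNNReal, fun z hz => (hC z hz).trans C.le_coe_toNNReal⟩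
  obtain ⟨s, hs, hs1, hsr, hsρ⟩ : ∃ s : ℝ, 0 < s ∧ s ≤ 1 ∧ s ≤ r ∧ s * (4 * ρ + 2) ≤ r :=
    ⟨min 1 (r / (4 * ρ + 2)), by positivity, min_le_left _ _,
      (min_le_right _ _).trans (div_le_self hr.le (by linarith [ρ.coe_nonneg])),
      (le_div_iff₀ (by positivity)).1 (min_le_right _ _)⟩
  obtain ⟨x, y, p₁, p₂, A₁, A₂, hp₁, hp₂, hmax, hx, hy, hA₁, hA₂, hle⟩ :=
    h₁.isSubgradientSelection.exists_max_sub_coupling h₂.isSubgradientSelection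
      (fun x => hρ _ (h₁.mem x)) (fun y => hρ _ (h₂.mem y)) hs
  obtain ⟨hxρ, hq⟩ := norm_le_and_norm_sub_le_of_eq_coupling hx hy (hρ _ (h₁.mem x))
    (hρ _ (h₂.mem y)) hp₁ hp₂
  obtain ⟨hyρ, hq'⟩ := norm_le_and_norm_sub_le_of_eq_coupling hy hx (hρ _ (h₂.mem y))
    (hρ _ (h₁.mem x)) hp₂ hp₁
  refine ⟨ζ₁ x, ζ₂ y, ζ₁ x - x, y - ζ₂ y, A₁ + (r - 1) • ContinuousLinearMap.id ℝ E,
    -(A₂ + (r - 1) • ContinuousLinearMap.id ℝ E), ⟨h₁.mem x, h₂.mem y, fun z hz => ?_,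
      hq.trans hsr, ?_, h₁.eventually_le_quadPoly hA₁ hr, ?_, fun h k => ?_⟩⟩
  · have hxz : ‖x - z‖ ≤ ρ + s + ρ := norm_sub_le_of_le hxρ (hρ z hz)
    have hyz : ‖y - z‖ ≤ ρ + s + ρ := norm_sub_le_of_le hyρ (hρ z hz)
    have herr : ‖p₁‖ * ‖x - z‖ + ‖p₂‖ * ‖y - z‖ ≤ s * (ρ + s + ρ) + s * (ρ + s + ρ) := by gcongr
    refine (sub_le_of_max_sub_coupling h₁ h₂ hmax hz).trans (add_le_add_right ?_ _)
    nlinarith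
  · rw [← neg_sub (ζ₁ x), smul_neg, sub_neg_eq_add, ← norm_neg, neg_add', neg_sub] at hq'
    exact hq'.trans hsr
  · filter_upwards [h₂.eventually_le_quadPoly hA₂ hr] with z hz
    rw [← neg_sub (ζ₂ y) y, quadPoly_neg, ContinuousLinearEquiv.refl_apply]
    simp only [Pi.neg_apply] at hz
    linarith
  · rw [neg_apply, inner_neg_left, inner_add_smul_id_self, inner_add_smul_id_self]
    linarith [hle h k]

section Rescaling

variable {F : Type*} [NormedAddCommGroup F] [NormedSpace ℝ F]

lemma eventually_nhdsWithin_preimage_symm (J : F ≃L[ℝ] E) {K : Set F} {ξ : E} {P : E → Prop}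
    (h : ∀ᶠ z in 𝓝[J.symm ⁻¹' K] ξ, P z) : ∀ᶠ z in 𝓝[K] J.symm ξ, P (J z) := by
  refine (tendsto_nhdsWithin_iff.2 ⟨?_, ?_⟩ : Tendsto J (𝓝[K] J.symm ξ) _).eventually h
  · simpa using (J.continuous.tendsto (J.symm ξ)).mono_left nhdsWithin_le_nhds
  · filter_upwards [self_mem_nhdsWithin] with z hz
    simpa using hz

lemma exists_isDoublingPoint [FiniteDimensional ℝ E] (J : F ≃L[ℝ] E) {K : Set F}
    (hK : IsCompact K) (hne : K.Nonempty) {u v : F → ℝ} (hu : ContinuousOn u K)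
    (hv : ContinuousOn v K) {r : ℝ} (hr : 0 < r) :
    ∃ ξ η q q' X Y, IsDoublingPoint J K u v r ξ η q q' X Y := by
  have hmaps : Set.MapsTo J.symm (J.symm ⁻¹' K) K := fun _ h => h
  obtain ⟨ξ, η, q, q', X, Y, h⟩ := exists_isDoublingPoint_refl
    (J.symm.toHomeomorph.isCompact_preimage.2 hK) (hne.preimage J.symm.surjective)
    (hu.comp J.symm.continuous.continuousOn hmaps) (hv.comp J.symm.continuous.continuousOn hmaps) hr
  have hsub (z : F) (ξ : E) : J (z - J.symm ξ) = J z - ξ := by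
    rw [map_sub, J.apply_symm_apply]
  refine ⟨J.symm ξ, J.symm η, q, q', X, Y, ⟨h.mem_left, h.mem_right, fun z hz => ?_, ?_, ?_, ?_,
    ?_, h.inner_sub_inner_le⟩⟩
  · rw [hsub, J.apply_symm_apply]
    simpa using h.sub_le (J z) (by simpa using hz)
  · rw [hsub, J.apply_symm_apply]
    exact h.norm_left_le
  · rw [hsub, J.apply_symm_apply]
    exact h.norm_right_le
  · filter_upwards [eventually_nhdsWithin_preimage_symm J h.le_left] with z hz
    rw [hsub]
    simpa using hz
  · filter_upwards [eventually_nhdsWithin_preimage_symm J h.le_right] with z hz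
    rw [hsub]
    simpa using hz

lemma exists_isDoublingPoint_of_contact [FiniteDimensional ℝ E] {K : Set F} (hK : IsCompact K)
    {u v : F → ℝ} (hu : ContinuousOn u K) (hv : ContinuousOn v K) (hle : ∀ z ∈ K, u z ≤ v z)
    {z₀ : F} (hz₀ : z₀ ∈ K) (hcontact : u z₀ = v z₀) {κ : ℝ} (hκ : 0 < κ) :
    ∃ δ > 0, ∀ J : F ≃L[ℝ] E, (∀ h, ‖h‖ ≤ δ * ‖J h‖) → ∀ r > 0, r ≤ δ →
      ∃ ξ η q q' X Y, IsDoublingPoint J K u v r ξ η q q' X Y ∧ ‖J (ξ - η)‖ ^ 2 ≤ κ ∧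
        |u ξ - v η| ≤ κ ∧ -κ ≤ u ξ - v ξ ∧ -κ ≤ u η - v η := by
  obtain ⟨M, hM⟩ := hK.exists_bound_of_continuousOn hu
  obtain ⟨M', hM'⟩ := hK.exists_bound_of_continuousOn hv
  have hMM' : 0 ≤ M + M' := add_nonneg ((norm_nonneg _).trans (hM z₀ hz₀))
    ((norm_nonneg _).trans (hM' z₀ hz₀))
  have hκ' : 0 < κ / 12 := by positivity
  obtain ⟨δ₁, hδ₁, hu_unif⟩ := Metric.uniformContinuousOn_iff_le.1
    (hK.uniformContinuousOn_of_continuous hu) _ hκ'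
  obtain ⟨δ₂, hδ₂, hv_unif⟩ := Metric.uniformContinuousOn_iff_le.1
    (hK.uniformContinuousOn_of_continuous hv) _ hκ'
  obtain ⟨N, hN, hNeq⟩ : ∃ N > 0, N = 6 * (M + M') + κ + 1 := ⟨_, by positivity, rfl⟩
  refine ⟨min (κ / 12) (min δ₁ δ₂ / N), by positivity, fun J hJ r hr hrδ => ?_⟩
  obtain ⟨ξ, η, q, q', X, Y, h⟩ := exists_isDoublingPoint J hK ⟨z₀, hz₀⟩ hu hv hr
  have hrκ : r ≤ κ / 12 := hrδ.trans (min_le_left _ _)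
  have hnear := h.sub_le z₀ hz₀
  rw [hcontact, sub_self] at hnear
  have hJN : ‖J (ξ - η)‖ ≤ N := by
    have huM := abs_le.1 (hM ξ h.mem_left)
    have hvM := abs_le.1 (hM' η h.mem_right)
    nlinarith
  have hdist : dist ξ η ≤ min δ₁ δ₂ := by
    rw [dist_eq_norm, ← div_mul_cancel₀ (min δ₁ δ₂) hN.ne']
    exact (hJ _).trans (by gcongr; exact min_le_right _ _)
  have hu_abs := abs_le.1 (hu_unif ξ h.mem_left η h.mem_right (hdist.trans (min_le_left _ _)))
  have hv_abs := abs_le.1 (hv_unif ξ h.mem_left η h.mem_right (hdist.trans (min_le_right _ _)))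
  have hle_η := hle η h.mem_right
  exact ⟨ξ, η, q, q', X, Y, h, by linarith, abs_le.2 ⟨by nlinarith, by linarith⟩,
    by nlinarith, by nlinarith⟩

end Rescaling

end TheoremOnSums

section ParabolicJets

open Filter Topology

variable {H : Type*} [NormedAddCommGroup H] [InnerProductSpace ℝ H] [CompleteSpace H]

/-- `φ` is `C³` near `z = (t, x)` and `∂ₜφ = a`, `Dφ = p`, `D²φ = A` at `z`. -/
structure HasParabolicJet (φ : ℝ × H → ℝ) (z : ℝ × H) (a : ℝ) (p : H) (A : H →L[ℝ] H) :
    Prop where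
  contDiffAt : ContDiffAt ℝ 3 φ z
  hasDerivAt : HasDerivAt (fun s => φ (s, z.2)) a z.1
  exists_gradient : ∃ g : H → H, g z.2 = p ∧
    (∀ᶠ y in 𝓝 z.2, HasGradientAt (fun y => φ (z.1, y)) (g y) y) ∧ HasFDerivAt g A z.2

namespace HasParabolicJet

variable {φ ψ : ℝ × H → ℝ} {z : ℝ × H} {a a' : ℝ} {p p' : H} {A A' : H →L[ℝ] H}

lemma add (hφ : HasParabolicJet φ z a p A) (hψ : HasParabolicJet ψ z a' p' A') :
    HasParabolicJet (fun z => φ z + ψ z) z (a + a') (p + p') (A + A') := by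
  obtain ⟨g, rfl, hg, hA⟩ := hφ.exists_gradient
  obtain ⟨g', rfl, hg', hA'⟩ := hψ.exists_gradient
  refine ⟨hφ.contDiffAt.add hψ.contDiffAt, hφ.hasDerivAt.add hψ.hasDerivAt,
    fun y => g y + g' y, rfl, ?_, hA.add hA'⟩
  filter_upwards [hg, hg'] with y hy hy'
  rw [hasGradientAt_iff_hasFDerivAt] at *
  rw [map_add]
  exact hy.add hy'

lemma const_mul (c : ℝ) (hφ : HasParabolicJet φ z a p A) :
    HasParabolicJet (fun z => c * φ z) z (c * a) (c • p) (c • A) := by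
  obtain ⟨g, rfl, hg, hA⟩ := hφ.exists_gradient
  refine ⟨contDiffAt_const.mul hφ.contDiffAt, hφ.hasDerivAt.const_mul c,
    fun y => c • g y, rfl, ?_, hA.const_smul c⟩
  filter_upwards [hg] with y hy
  rw [hasGradientAt_iff_hasFDerivAt] at *
  rw [map_smul]
  exact hy.const_mul c

end HasParabolicJet

variable {E : Type*} [NormedAddCommGroup E] [InnerProductSpace ℝ E]

lemma quadPoly_zero (q : E) (X : E →L[ℝ] E) : quadPoly q X 0 = 0 := by
  simp [quadPoly]

lemma contDiff_quadPoly (q : E) (X : E →L[ℝ] E) : ContDiff ℝ 3 (quadPoly q X) :=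
  (contDiff_const.inner ℝ contDiff_id).add (contDiff_const.mul (X.contDiff.inner ℝ contDiff_id))

variable [CompleteSpace E]

lemma hasGradientAt_quadPoly (q : E) (X : E →L[ℝ] E) (h : E) :
    HasGradientAt (quadPoly q X) (q + ((1 / 2 : ℝ) • (X + X.adjoint)) h) h := by
  rw [hasGradientAt_iff_hasFDerivAt]
  have hlin : HasFDerivAt (fun e : E => ⟪q, e⟫) (innerSL ℝ q) h := (innerSL ℝ q).hasFDerivAt
  have hquad : HasFDerivAt (fun e : E => ⟪X e, e⟫) _ h := X.hasFDerivAt.inner ℝ (hasFDerivAt_id h)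
  refine (hlin.add (hquad.const_mul (1 / 2))).congr_fderiv ?_
  ext k
  simp [ContinuousLinearMap.adjoint_inner_left, real_inner_comm, mul_add]

lemma hasGradientAt_quadPoly_comp (q : E) (X : E →L[ℝ] E) (L : H →L[ℝ] E) (x y : H) :
    HasGradientAt (fun y => quadPoly q X (L (y - x)))
      (L.adjoint (q + ((1 / 2 : ℝ) • (X + X.adjoint)) (L (y - x)))) y := by
  have hL : HasFDerivAt (fun y => L (y - x)) L y :=
    L.hasFDerivAt.comp y ((hasFDerivAt_id y).sub_const x)
  rw [hasGradientAt_iff_hasFDerivAt]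
  refine ((hasGradientAt_quadPoly q X _).hasFDerivAt.comp y hL).congr_fderiv ?_
  ext k
  simp only [ContinuousLinearMap.comp_apply, InnerProductSpace.toDual_apply_apply,
    ContinuousLinearMap.adjoint_inner_left]

lemma exists_hasParabolicJet_quadPoly (q : E) (X : E →L[ℝ] E) (J : ℝ × H →L[ℝ] E)
    (z : ℝ × H) :
    ∃ A : H →L[ℝ] H,
      HasParabolicJet (fun z' => quadPoly q X (J (z' - z))) z ⟪q, J (1, 0)⟫
        ((J ∘L ContinuousLinearMap.inr ℝ ℝ H).adjoint q) A ∧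
      ∀ h, ⟪A h, h⟫ = ⟪X (J (0, h)), J (0, h)⟫ := by
  set L := J ∘L ContinuousLinearMap.inr ℝ ℝ H with hL
  set S := (1 / 2 : ℝ) • (X + X.adjoint) with hS
  refine ⟨L.adjoint ∘L S ∘L L, ⟨?_, ?_, fun y => L.adjoint (q + S (L (y - z.2))), ?_, ?_, ?_⟩, ?_⟩
  · exact ((contDiff_quadPoly q X).comp
      (J.contDiff.comp (contDiff_id.sub contDiff_const))).contDiffAt
  · have h := (hasGradientAt_quadPoly_comp q X (J ∘L ContinuousLinearMap.inl ℝ ℝ H)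
      z.1 z.1).hasDerivAt'
    simp only [sub_self, map_zero, add_zero] at h
    have hadj : (J ∘L ContinuousLinearMap.inl ℝ ℝ H).adjoint q = ⟪q, J (1, 0)⟫ := by
      simpa using ContinuousLinearMap.adjoint_inner_left
        (J ∘L ContinuousLinearMap.inl ℝ ℝ H) (1 : ℝ) q
    rw [hadj] at h
    refine h.congr_of_eventuallyEq (Eventually.of_forall fun s => ?_)
    simp only [ContinuousLinearMap.comp_apply, ContinuousLinearMap.inl_apply, Prod.sub_def,
      sub_self]
  · simp
  · refine Eventually.of_forall fun y => ?_
    simp only [Prod.sub_def, sub_self]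
    exact hasGradientAt_quadPoly_comp q X L z.2 y
  · have h : HasFDerivAt (fun y => L (y - z.2)) L z.2 :=
      L.hasFDerivAt.comp z.2 ((hasFDerivAt_id z.2).sub_const z.2)
    exact L.adjoint.hasFDerivAt.comp z.2 ((S.hasFDerivAt.comp z.2 h).const_add q)
  · intro h
    simp only [hS, hL, ContinuousLinearMap.comp_apply, ContinuousLinearMap.adjoint_inner_left,
      ContinuousLinearMap.inr_apply, add_apply, smul_apply, inner_add_left, real_inner_smul_left,
      real_inner_comm (X (J (0, h))) (J (0, h))]
    ring

end ParabolicJets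

section TestFunctions

open Filter Topology

variable {n : ℕ}

lemma isTestFunction_add_const {φ : ℝ × Eucl n → ℝ} (hφ : ContDiff ℝ 3 φ)
    (hsupp : HasCompactSupport φ) (c : ℝ) : IsTestFunction fun t x => φ (t, x) + c := by
  refine ⟨hφ.add contDiff_const, fun i hi hi3 => ?_⟩
  have hi3' : ((i : ℕ) : WithTop ℕ∞) ≤ 3 := by exact_mod_cast hi3
  obtain ⟨M, hM⟩ :=
    (hsupp.iteratedFDeriv i).exists_bound_of_continuous (hφ.continuous_iteratedFDeriv hi3')
  refine ⟨M, fun p => ?_⟩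
  have h := fun_iteratedFDeriv_add_apply (x := p) (i := i)
    ((hφ.of_le hi3').contDiffAt) (contDiffAt_const (c := c))
  rw [iteratedFDeriv_const_of_ne (by omega), Pi.zero_apply, add_zero] at h
  exact h ▸ hM p

lemma exists_isTestFunction_eventuallyEq {φ : ℝ × Eucl n → ℝ} {z : ℝ × Eucl n}
    (hφ : ContDiffAt ℝ 3 φ z) (c : ℝ) :
    ∃ ψ : ℝ → Eucl n → ℝ, IsTestFunction ψ ∧ ∀ᶠ z' in 𝓝 z, ψ z'.1 z'.2 = φ z' + c := by
  obtain ⟨ρ, hρ, hball⟩ := Metric.eventually_nhds_iff_ball.1 (hφ.eventually (by simp))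
  let bump : ContDiffBump z := ⟨ρ / 4, ρ / 2, by positivity, by linarith⟩
  have hsmooth : ContDiff ℝ 3 fun z' => bump z' * φ z' := by
    refine contDiff_iff_contDiffAt.2 fun z' => ?_
    by_cases hz' : z' ∈ tsupport bump
    · rw [bump.tsupport_eq] at hz'
      exact bump.contDiffAt.mul
        (hball z' (Metric.closedBall_subset_ball (half_lt_self hρ) hz'))
    · refine contDiffAt_const (c := (0 : ℝ)) |>.congr_of_eventuallyEq ?_
      filter_upwards [notMem_tsupport_iff_eventuallyEq.1 hz'] with y hy
      rw [hy, Pi.zero_apply, zero_mul]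
  refine ⟨_, isTestFunction_add_const hsmooth bump.hasCompactSupport.mul_right c, ?_⟩
  filter_upwards [bump.eventuallyEq_one] with z' hz'
  rw [hz', Pi.one_apply, one_mul]

/-- The matrix of the bilinear form `(h, k) ↦ ⟪A h, k⟫`. -/
def formMatrix (A : Eucl n →L[ℝ] Eucl n) : Matrix (Fin n) (Fin n) ℝ :=
  Matrix.of fun i j => ⟪A (EuclideanSpace.single i (1 : ℝ)), EuclideanSpace.single j (1 : ℝ)⟫

lemma spaceHess_eq_formMatrix {ψ : ℝ → Eucl n → ℝ} {t : ℝ} {x : Eucl n}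
    {g : Eucl n → Eucl n} {A : Eucl n →L[ℝ] Eucl n}
    (hg : ∀ᶠ y in 𝓝 x, HasGradientAt (fun y => ψ t y) (g y) y) (hA : HasFDerivAt g A x) :
    spaceHess ψ t x = formMatrix A := by
  ext i j
  have hfderiv : (fun y => fderiv ℝ (fun y' => ψ t y') y (EuclideanSpace.single j (1 : ℝ)))
      =ᶠ[𝓝 x] fun y => ⟪g y, EuclideanSpace.single j (1 : ℝ)⟫ := by
    filter_upwards [hg] with y hy
    rw [hy.hasFDerivAt.fderiv, InnerProductSpace.toDual_apply_apply]
  have hinner : HasFDerivAt (fun y => ⟪g y, EuclideanSpace.single j (1 : ℝ)⟫) _ x :=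
    hA.inner ℝ (hasFDerivAt_const _ _)
  simp only [spaceHess, formMatrix, Matrix.of_apply]
  rw [hfderiv.fderiv_eq, hinner.fderiv]
  simp

lemma HasParabolicJet.exists_isTestFunction {φ : ℝ × Eucl n → ℝ} {z : ℝ × Eucl n} {a : ℝ}
    {p : Eucl n} {A : Eucl n →L[ℝ] Eucl n} (h : HasParabolicJet φ z a p A) (y : ℝ) :
    ∃ ψ : ℝ → Eucl n → ℝ, IsTestFunction ψ ∧
      (∀ᶠ z' in 𝓝 z, ψ z'.1 z'.2 = φ z' + (y - φ z)) ∧ timeDeriv ψ z.1 z.2 = a ∧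
      spaceGrad ψ z.1 z.2 = p ∧ spaceHess ψ z.1 z.2 = formMatrix A := by
  obtain ⟨g, rfl, hg, hA⟩ := h.exists_gradient
  obtain ⟨ψ, hψ, heq⟩ := exists_isTestFunction_eventuallyEq h.contDiffAt (y - φ z)
  have htime : ∀ᶠ s in 𝓝 z.1, ψ s z.2 = φ (s, z.2) + (y - φ z) :=
    (by fun_prop : ContinuousAt (fun s => (s, z.2)) z.1).eventually heq
  have hspace : ∀ᶠ x in 𝓝 z.2, ψ z.1 x = φ (z.1, x) + (y - φ z) :=
    (by fun_prop : ContinuousAt (fun x => (z.1, x)) z.2).eventually heq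
  have hgψ : ∀ᶠ x in 𝓝 z.2, HasGradientAt (fun x => ψ z.1 x) (g x) x := by
    filter_upwards [hg, hspace.eventually_nhds] with x hx hs
    rw [hasGradientAt_iff_hasFDerivAt] at hx ⊢
    exact (hx.add_const _).congr_of_eventuallyEq hs
  exact ⟨ψ, hψ, heq, ((h.hasDerivAt.add_const _).congr_of_eventuallyEq htime).deriv,
    hgψ.self_of_nhds.gradient, spaceHess_eq_formMatrix hgψ hA⟩

end TestFunctions

section TouchingSolutions

open Filter Topology

variable {n : ℕ} {T : ℝ} {G : ℝ → Eucl n → ℝ → Eucl n → Matrix (Fin n) (Fin n) ℝ → ℝ}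
  {g : Eucl n → ℝ} {w : ℝ → Eucl n → ℝ}

/-- Viscosity subsolution of `∂ₜw + G(t, x, w, Dw, D²w) = 0` on `[0,T) × ℝⁿ` in the usual sense:
only test functions with the same value as `w` at the contact point are used, and no terminal
condition is imposed. -/
def IsTouchingSubsolution (T : ℝ) (G : ℝ → Eucl n → ℝ → Eucl n → Matrix (Fin n) (Fin n) ℝ → ℝ)
    (w : ℝ → Eucl n → ℝ) : Prop :=
  ∀ φ : ℝ → Eucl n → ℝ, IsTestFunction φ → ∀ t ∈ Set.Ico (0 : ℝ) T, ∀ x : Eucl n,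
    φ t x = w t x →
    IsLocalMaxOn (fun p : ℝ × Eucl n => w p.1 p.2 - φ p.1 p.2)
      (Set.Icc (0 : ℝ) T ×ˢ (Set.univ : Set (Eucl n))) (t, x) →
    0 ≤ timeDeriv φ t x + G t x (w t x) (spaceGrad φ t x) (spaceHess φ t x)

/-- Viscosity supersolution of `∂ₜw + G(t, x, w, Dw, D²w) = 0` in the sense of
`IsTouchingSubsolution`. -/
def IsTouchingSupersolution (T : ℝ)
    (G : ℝ → Eucl n → ℝ → Eucl n → Matrix (Fin n) (Fin n) ℝ → ℝ) (w : ℝ → Eucl n → ℝ) : Prop :=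
  ∀ φ : ℝ → Eucl n → ℝ, IsTestFunction φ → ∀ t ∈ Set.Ico (0 : ℝ) T, ∀ x : Eucl n,
    φ t x = w t x →
    IsLocalMinOn (fun p : ℝ × Eucl n => w p.1 p.2 - φ p.1 p.2)
      (Set.Icc (0 : ℝ) T ×ˢ (Set.univ : Set (Eucl n))) (t, x) →
    timeDeriv φ t x + G t x (w t x) (spaceGrad φ t x) (spaceHess φ t x) ≤ 0

lemma IsViscositySubsolution.isTouchingSubsolution (hw : IsViscositySubsolution T G g w) :
    IsTouchingSubsolution T G w :=
  fun φ hφ t ht x hval hmax => hval ▸ hw.2 φ hφ t ht x hmax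

lemma IsViscositySupersolution.isTouchingSupersolution (hw : IsViscositySupersolution T G g w) :
    IsTouchingSupersolution T G w :=
  fun φ hφ t ht x hval hmin => hval ▸ hw.2 φ hφ t ht x hmin

variable {φ : ℝ × Eucl n → ℝ} {z : ℝ × Eucl n} {a : ℝ} {p : Eucl n} {A : Eucl n →L[ℝ] Eucl n}

lemma IsTouchingSubsolution.nonneg_of_hasParabolicJet (hw : IsTouchingSubsolution T G w)
    (ht : z.1 ∈ Set.Ico 0 T) (hφ : HasParabolicJet φ z a p A)
    (hle : ∀ᶠ z' in 𝓝[Set.Icc 0 T ×ˢ Set.univ] z, w z'.1 z'.2 - w z.1 z.2 ≤ φ z' - φ z) :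
    0 ≤ a + G z.1 z.2 (w z.1 z.2) p (formMatrix A) := by
  obtain ⟨ψ, hψ, heq, rfl, rfl, hA⟩ := hφ.exists_isTestFunction (w z.1 z.2)
  have hval : ψ z.1 z.2 = w z.1 z.2 := by rw [heq.self_of_nhds, add_sub_cancel]
  rw [← hA]
  refine hw ψ hψ z.1 ht z.2 hval ?_
  filter_upwards [hle, mem_nhdsWithin_of_mem_nhds heq] with z' hz' heq'
  linarith

lemma IsTouchingSupersolution.nonpos_of_hasParabolicJet (hw : IsTouchingSupersolution T G w)
    (ht : z.1 ∈ Set.Ico 0 T) (hφ : HasParabolicJet φ z a p A)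
    (hle : ∀ᶠ z' in 𝓝[Set.Icc 0 T ×ˢ Set.univ] z, φ z' - φ z ≤ w z'.1 z'.2 - w z.1 z.2) :
    a + G z.1 z.2 (w z.1 z.2) p (formMatrix A) ≤ 0 := by
  obtain ⟨ψ, hψ, heq, rfl, rfl, hA⟩ := hφ.exists_isTestFunction (w z.1 z.2)
  have hval : ψ z.1 z.2 = w z.1 z.2 := by rw [heq.self_of_nhds, add_sub_cancel]
  rw [← hA]
  refine hw ψ hψ z.1 ht z.2 hval ?_
  filter_upwards [hle, mem_nhdsWithin_of_mem_nhds heq] with z' hz' heq'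
  linarith

end TouchingSolutions

section Rescaling

variable {n : ℕ}

/-- Time-space points, with the Hilbert space norm. -/
abbrev TimeSpace (n : ℕ) := WithLp 2 (ℝ × Eucl n)

/-- The rescaling `(t, x) ↦ (t / a, x / e)` with values in the Hilbert space `ℝ × ℝⁿ`. -/
def rescale {a e : ℝ} (ha : a ≠ 0) (he : e ≠ 0) : (ℝ × Eucl n) ≃L[ℝ] TimeSpace n :=
  ((ContinuousLinearEquiv.smulLeft (Units.mk0 a ha)⁻¹).prodCongr
    (ContinuousLinearEquiv.smulLeft (Units.mk0 e he)⁻¹)).trans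
    (WithLp.prodContinuousLinearEquiv 2 ℝ ℝ (Eucl n)).symm

variable {a e : ℝ} {ha : a ≠ 0} {he : e ≠ 0}

lemma rescale_apply (z : ℝ × Eucl n) :
    rescale ha he z = WithLp.toLp 2 (a⁻¹ * z.1, e⁻¹ • z.2) := by
  rfl

lemma abs_fst_le_mul_norm_rescale (ha₀ : 0 < a) (z : ℝ × Eucl n) :
    |z.1| ≤ a * ‖rescale ha he z‖ := by
  have h : |a⁻¹ * z.1| ≤ ‖rescale ha he z‖ := WithLp.norm_fst_le _ (rescale ha he z)
  rwa [abs_mul, abs_of_pos (inv_pos.2 ha₀), inv_mul_le_iff₀ ha₀] at h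

lemma norm_snd_le_mul_norm_rescale (he₀ : 0 < e) (z : ℝ × Eucl n) :
    ‖z.2‖ ≤ e * ‖rescale ha he z‖ := by
  have h : ‖e⁻¹ • z.2‖ ≤ ‖rescale ha he z‖ := WithLp.norm_snd_le _ (rescale ha he z)
  rwa [norm_smul, Real.norm_of_nonneg (inv_pos.2 he₀).le, inv_mul_le_iff₀ he₀] at h

lemma norm_le_mul_norm_rescale {δ : ℝ} (ha₀ : 0 < a) (he₀ : 0 < e) (haδ : a ≤ δ) (heδ : e ≤ δ)
    (z : ℝ × Eucl n) : ‖z‖ ≤ δ * ‖rescale ha he z‖ :=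
  max_le ((abs_fst_le_mul_norm_rescale ha₀ z).trans (by gcongr))
    ((norm_snd_le_mul_norm_rescale he₀ z).trans (by gcongr))

lemma inner_rescale_one_zero (q : TimeSpace n) :
    ⟪q, rescale ha he (1, 0)⟫ = a⁻¹ * q.fst := by
  rw [WithLp.prod_inner_apply, rescale_apply]
  simp

lemma adjoint_rescale_comp_inr (q : TimeSpace n) :
    ((rescale ha he).toContinuousLinearMap ∘L
      ContinuousLinearMap.inr ℝ ℝ (Eucl n)).adjoint q = e⁻¹ • q.snd := by
  refine ext_inner_right ℝ fun h => ?_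
  rw [ContinuousLinearMap.adjoint_inner_left, WithLp.prod_inner_apply]
  simp [rescale_apply, real_inner_smul_left, real_inner_smul_right]

lemma norm_rescale_zero_sq (h : Eucl n) :
    ‖rescale ha he (0, h)‖ ^ 2 = (e⁻¹) ^ 2 * ‖h‖ ^ 2 := by
  rw [WithLp.prod_norm_sq_eq_of_L2, rescale_apply]
  simp [norm_smul, mul_pow]

end Rescaling

section Generator

variable {n d : ℕ}

/-- The `k`-th column of a matrix, as a vector of the Euclidean space. -/
def colVec (M : Matrix (Fin n) (Fin d) ℝ) (k : Fin d) : Eucl n :=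
  WithLp.toLp 2 fun i => M i k

lemma colVec_sub (M N : Matrix (Fin n) (Fin d) ℝ) (k : Fin d) :
    colVec (M - N) k = colVec M k - colVec N k := rfl

lemma sum_norm_colVec_sq (M : Matrix (Fin n) (Fin d) ℝ) : ∑ k, ‖colVec M k‖ ^ 2 = ‖M‖ ^ 2 := by
  rw [Matrix.frobenius_norm_def, ← Real.sqrt_eq_rpow, Real.sq_sqrt (by positivity),
    Finset.sum_comm]
  refine Finset.sum_congr rfl fun k _ => ?_
  rw [EuclideanSpace.norm_sq_eq]
  simp [colVec]

lemma colVec_eq_sum_single (M : Matrix (Fin n) (Fin d) ℝ) (k : Fin d) :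
    colVec M k = ∑ i, M i k • EuclideanSpace.single i (1 : ℝ) := by
  ext i
  simp [colVec, Finset.sum_apply, Pi.single_apply]

lemma rowMul_apply_eq_inner (p : Eucl n) (M : Matrix (Fin n) (Fin d) ℝ) (k : Fin d) :
    rowMul p M k = ⟪p, colVec M k⟫ := by
  simp [rowMul, colVec, PiLp.inner_apply, mul_comm]

lemma norm_rowMul_le (p : Eucl n) (M : Matrix (Fin n) (Fin d) ℝ) :
    ‖rowMul p M‖ ≤ ‖p‖ * ‖M‖ := by
  refine abs_le_of_sq_le_sq' ?_ (by positivity) |>.2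
  rw [mul_pow, ← sum_norm_colVec_sq, EuclideanSpace.norm_sq_eq, Finset.mul_sum]
  refine Finset.sum_le_sum fun k _ => ?_
  rw [rowMul_apply_eq_inner, ← mul_pow, Real.norm_eq_abs]
  exact pow_le_pow_left₀ (abs_nonneg _) (abs_real_inner_le_norm _ _) 2

lemma rowMul_sub_left (p p' : Eucl n) (M : Matrix (Fin n) (Fin d) ℝ) :
    rowMul (p - p') M = rowMul p M - rowMul p' M := by
  ext k
  simp [rowMul, sub_mul]

lemma rowMul_sub_right (p : Eucl n) (M M' : Matrix (Fin n) (Fin d) ℝ) :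
    rowMul p (M - M') = rowMul p M - rowMul p M' := by
  ext k
  simp [rowMul, mul_sub]

/-- `tr (S Sᵀ A)`, the trace of the form `A` along the columns of `S`. -/
def diffusionTrace (S : Matrix (Fin n) (Fin d) ℝ) (A : Eucl n →L[ℝ] Eucl n) : ℝ :=
  ∑ k, ⟪A (colVec S k), colVec S k⟫

lemma trace_mul_formMatrix (S : Matrix (Fin n) (Fin d) ℝ) (A : Eucl n →L[ℝ] Eucl n) :
    Matrix.trace (S * Sᵀ * formMatrix A) = diffusionTrace S A := by
  have hcol (k) : ⟪A (colVec S k), colVec S k⟫ = ∑ i, ∑ j, S i k * S j k * formMatrix A i j := by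
    conv_lhs => rw [colVec_eq_sum_single S k]
    rw [map_sum, sum_inner]
    refine Finset.sum_congr rfl fun i _ => ?_
    rw [inner_sum]
    refine Finset.sum_congr rfl fun j _ => ?_
    rw [map_smul, real_inner_smul_left, real_inner_smul_right]
    simp only [formMatrix, Matrix.of_apply]
    ring
  have htrace : Matrix.trace (S * Sᵀ * formMatrix A) =
      ∑ i, ∑ j, ∑ k, S i k * S j k * formMatrix A j i := by
    simp only [Matrix.trace, Matrix.diag_apply, Matrix.mul_apply, Matrix.transpose_apply,
      Finset.sum_mul]
  rw [htrace, diffusionTrace, Finset.sum_congr rfl fun k _ => hcol k, Finset.sum_comm,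
    Finset.sum_comm (γ := Fin d)]
  refine Finset.sum_congr rfl fun i _ => ?_
  rw [Finset.sum_comm]
  refine Finset.sum_congr rfl fun k _ => Finset.sum_congr rfl fun j _ => ?_
  ring

lemma diffusionTrace_add (S : Matrix (Fin n) (Fin d) ℝ) (A A' : Eucl n →L[ℝ] Eucl n) :
    diffusionTrace S (A + A') = diffusionTrace S A + diffusionTrace S A' := by
  simp only [diffusionTrace, add_apply, inner_add_left, Finset.sum_add_distrib]

lemma diffusionTrace_smul (S : Matrix (Fin n) (Fin d) ℝ) (c : ℝ) (A : Eucl n →L[ℝ] Eucl n) :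
    diffusionTrace S (c • A) = c * diffusionTrace S A := by
  simp only [diffusionTrace, smul_apply, real_inner_smul_left, Finset.mul_sum]

lemma diffusionTrace_le {A : Eucl n →L[ℝ] Eucl n} {m : ℝ} (hA : ∀ h, ⟪A h, h⟫ ≤ m * ‖h‖ ^ 2)
    (S : Matrix (Fin n) (Fin d) ℝ) : diffusionTrace S A ≤ m * ‖S‖ ^ 2 := by
  rw [← sum_norm_colVec_sq, Finset.mul_sum]
  exact Finset.sum_le_sum fun k _ => hA _

lemma abs_diffusionTrace_le (S : Matrix (Fin n) (Fin d) ℝ) (A : Eucl n →L[ℝ] Eucl n) :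
    |diffusionTrace S A| ≤ ‖A‖ * ‖S‖ ^ 2 := by
  have hform (B : Eucl n →L[ℝ] Eucl n) (h : Eucl n) : ⟪B h, h⟫ ≤ ‖B‖ * ‖h‖ ^ 2 := by
    rw [pow_two, ← mul_assoc]
    exact (real_inner_le_norm _ _).trans (by gcongr; exact B.le_opNorm h)
  have hneg := diffusionTrace_le (hform (-A)) S
  rw [← neg_one_smul ℝ A, diffusionTrace_smul, neg_one_smul, norm_neg] at hneg
  exact abs_le.2 ⟨by linarith, diffusionTrace_le (hform A) S⟩

lemma diffusionTrace_sub_le {A A' : Eucl n →L[ℝ] Eucl n} {m r : ℝ}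
    (hA : ∀ h k, ⟪A h, h⟫ - ⟪A' k, k⟫ ≤ m * (‖h - k‖ ^ 2 + r * (‖h‖ ^ 2 + ‖k‖ ^ 2)))
    (S S' : Matrix (Fin n) (Fin d) ℝ) :
    diffusionTrace S A - diffusionTrace S' A' ≤
      m * (‖S - S'‖ ^ 2 + r * (‖S‖ ^ 2 + ‖S'‖ ^ 2)) := by
  simp only [diffusionTrace, ← sum_norm_colVec_sq, ← Finset.sum_sub_distrib,
    ← Finset.sum_add_distrib, Finset.mul_sum]
  exact Finset.sum_le_sum fun k _ => (hA _ _).trans_eq (by rw [colVec_sub])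

/-- The value of the Hamiltonian's integrand at gradient `p` and Hessian `A`, for a diffusion
coefficient `S`, a drift `b` and a driver `g`. -/
def generator (S : Matrix (Fin n) (Fin d) ℝ) (b : Eucl n) (g : Eucl d → ℝ) (p : Eucl n)
    (A : Eucl n →L[ℝ] Eucl n) : ℝ :=
  1 / 2 * diffusionTrace S A + ⟪p, b⟫ + g (rowMul p S)

/-- The sublinear operator dominating the increments of `generator S b g` for every `C`-Lipschitz
driver `g`. -/
def extremalGenerator (C : ℝ) (S : Matrix (Fin n) (Fin d) ℝ) (b p : Eucl n)
    (A : Eucl n →L[ℝ] Eucl n) : ℝ :=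
  1 / 2 * diffusionTrace S A + ⟪p, b⟫ + C * (‖p‖ * ‖S‖)

variable {C B : ℝ} {S S' : Matrix (Fin n) (Fin d) ℝ} {b b' p p' : Eucl n}
  {A A' : Eucl n →L[ℝ] Eucl n} {g g' : Eucl d → ℝ}

lemma extremalGenerator_smul {θ : ℝ} (hθ : 0 ≤ θ) :
    extremalGenerator C S b (θ • p) (θ • A) = θ * extremalGenerator C S b p A := by
  simp only [extremalGenerator, diffusionTrace_smul, real_inner_smul_left, norm_smul,
    Real.norm_of_nonneg hθ]
  ring

lemma driver_rowMul_sub_le (hC : 0 ≤ C) (hg : ∀ z z', |g z - g z'| ≤ C * ‖z - z'‖)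
    (p p' : Eucl n) (S : Matrix (Fin n) (Fin d) ℝ) :
    g (rowMul p S) - g (rowMul p' S) ≤ C * (‖p - p'‖ * ‖S‖) := by
  refine (le_abs_self _).trans ((hg _ _).trans ?_)
  rw [← rowMul_sub_left]
  gcongr
  exact norm_rowMul_le _ _

lemma generator_add_le (hC : 0 ≤ C) (hg : ∀ z z', |g z - g z'| ≤ C * ‖z - z'‖) :
    generator S b g (p + p') (A + A') ≤ generator S b g p A + extremalGenerator C S b p' A' := by
  have h := driver_rowMul_sub_le hC hg (p + p') p S
  rw [add_sub_cancel_left] at h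
  simp only [generator, extremalGenerator, diffusionTrace_add, inner_add_left]
  linarith

lemma abs_generator_le (hC : 0 ≤ C) (hg : ∀ z z', |g z - g z'| ≤ C * ‖z - z'‖) (hS : ‖S‖ ≤ B)
    (hb : ‖b‖ ≤ B) (hg₀ : |g 0| ≤ B) :
    |generator S b g p A| ≤ ‖A‖ * B ^ 2 + ‖p‖ * B + (B + C * (‖p‖ * B)) := by
  have hB : 0 ≤ B := (norm_nonneg _).trans hb
  have htrace : |diffusionTrace S A| ≤ ‖A‖ * B ^ 2 :=
    (abs_diffusionTrace_le S A).trans (by gcongr)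
  have hdrift : |⟪p, b⟫| ≤ ‖p‖ * B := (abs_real_inner_le_norm _ _).trans (by gcongr)
  have hdriver : |g (rowMul p S) - g 0| ≤ C * (‖p‖ * B) := by
    refine (hg _ _).trans ?_
    rw [sub_zero]
    gcongr
    exact (norm_rowMul_le p S).trans (by gcongr)
  have hA : 0 ≤ ‖A‖ * B ^ 2 := by positivity
  rw [abs_le] at *
  simp only [generator]
  constructor <;> linarith [htrace.1, htrace.2, hdrift.1, hdrift.2, hdriver.1, hdriver.2,
    hg₀.1, hg₀.2]

/-- With the penalization `‖x - y‖² / e²`, gradients are of size `1 / e` and the coefficients differ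
by `O(e)`, so that all differences but that of the drivers are controlled by `μ` and `r / e²`. -/
lemma generator_sub_le {e r μ : ℝ} (he : 0 < e) (hr : 0 ≤ r) (hC : 0 ≤ C)
    (hA : ∀ h k, ⟪A h, h⟫ - ⟪A' k, k⟫ ≤
      (e⁻¹) ^ 2 * (‖h - k‖ ^ 2 + r * (‖h‖ ^ 2 + ‖k‖ ^ 2)))
    (hp : ‖p‖ ≤ e⁻¹) (hpp : ‖p - p'‖ ≤ 2 * r * e⁻¹) (hS : ‖S‖ ≤ B) (hS' : ‖S'‖ ≤ B)
    (hb' : ‖b'‖ ≤ B) (hSS : ‖S - S'‖ ≤ μ * e) (hbb : ‖b - b'‖ ≤ μ * e)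
    (hg : ∀ z z', |g z - g z'| ≤ C * ‖z - z'‖) :
    generator S b g p A - generator S' b' g' p' A' ≤
      1 / 2 * μ ^ 2 + r * (e⁻¹ * B) ^ 2 + (1 + C) * (μ + 2 * r * (e⁻¹ * B)) +
        (g (rowMul p' S') - g' (rowMul p' S')) := by
  have hcancel : e⁻¹ * (μ * e) = μ := by field_simp
  have htrace : diffusionTrace S A - diffusionTrace S' A' ≤ μ ^ 2 + 2 * (r * (e⁻¹ * B) ^ 2) := by
    calc _ ≤ (e⁻¹) ^ 2 * (‖S - S'‖ ^ 2 + r * (‖S‖ ^ 2 + ‖S'‖ ^ 2)) := diffusionTrace_sub_le hA S S'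
      _ ≤ (e⁻¹) ^ 2 * ((μ * e) ^ 2 + r * (B ^ 2 + B ^ 2)) := by gcongr
      _ = (e⁻¹ * (μ * e)) ^ 2 + 2 * (r * (e⁻¹ * B) ^ 2) := by ring
      _ = _ := by rw [hcancel]
  have hprod {E : Type} [NormedAddCommGroup E] {y y' : E} (hyy : ‖y - y'‖ ≤ μ * e)
      (hy' : ‖y'‖ ≤ B) : ‖p‖ * ‖y - y'‖ + ‖p - p'‖ * ‖y'‖ ≤ μ + 2 * r * (e⁻¹ * B) := by
    calc _ ≤ e⁻¹ * (μ * e) + 2 * r * e⁻¹ * B := by gcongr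
      _ = _ := by rw [hcancel]; ring
  have hdrift : ⟪p, b⟫ - ⟪p', b'⟫ ≤ μ + 2 * r * (e⁻¹ * B) := by
    have : ⟪p, b⟫ - ⟪p', b'⟫ = ⟪p, b - b'⟫ + ⟪p - p', b'⟫ := by
      rw [inner_sub_right, inner_sub_left]; ring
    rw [this]
    exact (add_le_add (real_inner_le_norm _ _) (real_inner_le_norm _ _)).trans (hprod hbb hb')
  have hrow : ‖rowMul p S - rowMul p' S'‖ ≤ μ + 2 * r * (e⁻¹ * B) := by
    have : rowMul p S - rowMul p' S' = rowMul p (S - S') + rowMul (p - p') S' := by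
      rw [rowMul_sub_right, rowMul_sub_left]; abel
    rw [this]
    exact (norm_add_le_of_le (norm_rowMul_le _ _) (norm_rowMul_le _ _)).trans (hprod hSS hS')
  have hdriver := (abs_le.1 ((hg (rowMul p S) (rowMul p' S')).trans
    (mul_le_mul_of_nonneg_left hrow hC))).2
  simp only [generator]
  linarith

end Generator

section RadialProfile

variable {H : Type*} [NormedAddCommGroup H] {l : ℝ}

/-- The logarithmic weight `log √(1 + s) + 1`. -/
def logWeight (s : ℝ) : ℝ := Real.log (1 + s) / 2 + 1

lemma one_le_logWeight {s : ℝ} (hs : 0 ≤ s) : 1 ≤ logWeight s := by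
  have := Real.log_nonneg (by linarith : (1 : ℝ) ≤ 1 + s)
  unfold logWeight
  linarith

lemma hasDerivAt_logWeight {s : ℝ} (hs : 0 ≤ s) :
    HasDerivAt logWeight (1 / (2 * (1 + s))) s := by
  have h : HasDerivAt (fun s : ℝ => 1 + s) 1 s := (hasDerivAt_id s).const_add 1
  refine (((h.log (by positivity)).div_const 2).add_const 1).congr_deriv ?_
  field_simp

/-- The function `exp (l (log √(1 + |x|²) + 1)²)`, a smooth version of the growth allowed in the
class `Θ`. -/
def radialProfile (l : ℝ) (x : H) : ℝ := Real.exp (l * logWeight (‖x‖ ^ 2) ^ 2)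

/-- Half the derivative of the exponent of `radialProfile l` with respect to the logarithmic
weight: the scale of the derivatives of `radialProfile l` relative to its value. -/
def radialSlope (l : ℝ) (x : H) : ℝ := l * logWeight (‖x‖ ^ 2)

lemma one_le_radialProfile (hl : 0 ≤ l) (x : H) : 1 ≤ radialProfile l x :=
  Real.one_le_exp (mul_nonneg hl (sq_nonneg _))

lemma one_le_radialSlope (hl : 1 ≤ l) (x : H) : 1 ≤ radialSlope l x :=
  one_le_mul_of_one_le_of_one_le hl (one_le_logWeight (sq_nonneg _))

/-- The function `m` of `s = |x|²` such that `m • x` is the gradient of `radialProfile l`. -/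
def radialFactor (l s : ℝ) : ℝ :=
  2 * l * Real.exp (l * logWeight s ^ 2) * logWeight s / (1 + s)

/-- The derivative of `radialFactor l`. -/
def radialFactorDeriv (l s : ℝ) : ℝ :=
  2 * l * Real.exp (l * logWeight s ^ 2) * (l * logWeight s ^ 2 + 1 / 2 - logWeight s) /
    (1 + s) ^ 2

variable [InnerProductSpace ℝ H]

/-- The gradient of `radialProfile l`. -/
def radialGrad (l : ℝ) (x : H) : H := radialFactor l (‖x‖ ^ 2) • x

/-- The Hessian of `radialProfile l`. -/
def radialHess (l : ℝ) (x : H) : H →L[ℝ] H :=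
  radialFactor l (‖x‖ ^ 2) • ContinuousLinearMap.id ℝ H +
    (radialFactorDeriv l (‖x‖ ^ 2) • (2 • innerSL ℝ x)).smulRight x

lemma hasDerivAt_radialFactor (l : ℝ) {s : ℝ} (hs : 0 ≤ s) :
    HasDerivAt (radialFactor l) (radialFactorDeriv l s) s := by
  have hweight := hasDerivAt_logWeight hs
  have hden : HasDerivAt (fun s : ℝ => 1 + s) 1 s := (hasDerivAt_id s).const_add 1
  refine (((((hweight.pow 2).const_mul l).exp.const_mul (2 * l)).mul hweight).div hden
    (by positivity)).congr_deriv ?_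
  simp only [radialFactorDeriv, Pi.pow_apply, Pi.mul_apply]
  have : 1 + s ≠ 0 := by positivity
  field_simp
  ring

lemma hasGradientAt_radialProfile [CompleteSpace H] (l : ℝ) (x : H) :
    HasGradientAt (radialProfile l) (radialGrad l x) x := by
  rw [hasGradientAt_iff_hasFDerivAt]
  have hnorm : HasFDerivAt (fun e : H => ‖e‖ ^ 2) _ x := (hasStrictFDerivAt_norm_sq x).hasFDerivAt
  have hexp := (((hasDerivAt_logWeight (sq_nonneg ‖x‖)).pow 2).const_mul l).exp
  refine (hexp.comp_hasFDerivAt x hnorm).congr_fderiv ?_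
  ext k
  have : 1 + ‖x‖ ^ 2 ≠ 0 := by positivity
  simp only [radialGrad, radialFactor, map_smul, Pi.pow_apply, Nat.cast_ofNat, Nat.add_one_sub_one,
    pow_one, one_div, mul_inv_rev, smul_apply, coe_innerSL_apply, nsmul_eq_mul, smul_eq_mul,
    InnerProductSpace.toDual_apply_apply]
  field_simp

lemma hasFDerivAt_radialGrad (l : ℝ) (x : H) :
    HasFDerivAt (radialGrad l) (radialHess l x) x := by
  have hnorm : HasFDerivAt (fun e : H => ‖e‖ ^ 2) (2 • innerSL ℝ x) x :=
    (hasStrictFDerivAt_norm_sq x).hasFDerivAt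
  exact ((hasDerivAt_radialFactor l (sq_nonneg ‖x‖)).comp_hasFDerivAt x hnorm).smul
    (hasFDerivAt_id x)

lemma norm_radialGrad (hl : 0 ≤ l) (x : H) :
    ‖radialGrad l x‖ = 2 * radialSlope l x * radialProfile l x / (1 + ‖x‖ ^ 2) * ‖x‖ := by
  have := one_le_logWeight (sq_nonneg ‖x‖)
  unfold radialGrad radialFactor radialSlope radialProfile
  rw [norm_smul, Real.norm_of_nonneg (by positivity)]
  ring

lemma inner_radialHess_le (hl : 0 ≤ l) (x h : H) :
    ⟪radialHess l x h, h⟫ ≤ radialProfile l x * (2 * radialSlope l x + 4 * radialSlope l x ^ 2) /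
      (1 + ‖x‖ ^ 2) * ‖h‖ ^ 2 := by
  have hL := one_le_logWeight (sq_nonneg ‖x‖)
  have hform : ⟪radialHess l x h, h⟫ =
      radialFactor l (‖x‖ ^ 2) * ‖h‖ ^ 2 + radialFactorDeriv l (‖x‖ ^ 2) * 2 * ⟪x, h⟫ ^ 2 := by
    simp only [radialHess, add_apply, smul_apply, ContinuousLinearMap.id_apply,
      ContinuousLinearMap.smulRight_apply, innerSL_apply_apply, inner_add_left,
      real_inner_smul_left, real_inner_self_eq_norm_sq, smul_eq_mul, nsmul_eq_mul]
    push_cast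
    ring
  have hinner : ⟪x, h⟫ ^ 2 ≤ (1 + ‖x‖ ^ 2) * ‖h‖ ^ 2 := by
    have : |⟪x, h⟫| ^ 2 ≤ (‖x‖ * ‖h‖) ^ 2 := by gcongr; exact abs_real_inner_le_norm _ _
    rw [sq_abs, mul_pow] at this
    linarith [sq_nonneg ‖h‖]
  rw [hform]
  unfold radialFactor radialFactorDeriv radialSlope radialProfile
  generalize logWeight (‖x‖ ^ 2) = L at *
  set e := Real.exp (l * L ^ 2)
  calc _ ≤ 2 * l * e * L / (1 + ‖x‖ ^ 2) * ‖h‖ ^ 2 +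
        2 * l * e * (l * L ^ 2) / (1 + ‖x‖ ^ 2) ^ 2 * 2 * ((1 + ‖x‖ ^ 2) * ‖h‖ ^ 2) := by
        gcongr
        linarith
    _ = _ := by
        have : 1 + ‖x‖ ^ 2 ≠ 0 := by positivity
        field_simp
        ring

lemma norm_radialGrad_mul_le {C₀ B : ℝ} (hC₀ : 0 ≤ C₀) (hl : 1 ≤ l) {x : H}
    (hB : B ≤ C₀ * (1 + ‖x‖)) :
    ‖radialGrad l x‖ * B ≤ 4 * C₀ * (radialSlope l x * radialProfile l x) := by
  have hm := zero_le_one.trans (one_le_radialSlope hl x)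
  have hχ := zero_le_one.trans (one_le_radialProfile (zero_le_one.trans hl) x)
  have hquot : ‖x‖ * (1 + ‖x‖) / (1 + ‖x‖ ^ 2) ≤ 2 := by
    rw [div_le_iff₀ (by positivity)]
    nlinarith [sq_nonneg (‖x‖ - 1)]
  calc ‖radialGrad l x‖ * B ≤ ‖radialGrad l x‖ * (C₀ * (1 + ‖x‖)) := by gcongr
    _ = 2 * C₀ * (radialSlope l x * radialProfile l x) *
        (‖x‖ * (1 + ‖x‖) / (1 + ‖x‖ ^ 2)) := by
        rw [norm_radialGrad (zero_le_one.trans hl)]; ring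
    _ ≤ 2 * C₀ * (radialSlope l x * radialProfile l x) * 2 := by gcongr
    _ = _ := by ring

end RadialProfile

section Barrier

open Filter Topology

variable {n d : ℕ} {c t₁ C C₀ l : ℝ}

lemma diffusionTrace_radialHess_le (hl : 1 ≤ l) {x : Eucl n}
    {S : Matrix (Fin n) (Fin d) ℝ} (hS : ‖S‖ ≤ C₀ * (1 + ‖x‖)) :
    diffusionTrace S (radialHess l x) ≤
      12 * C₀ ^ 2 * (radialSlope l x ^ 2 * radialProfile l x) := by
  have hm := one_le_radialSlope hl x
  have hχ := one_le_radialProfile (zero_le_one.trans hl) x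
  have hmm : radialSlope l x ≤ radialSlope l x ^ 2 := le_self_pow₀ hm two_ne_zero
  have hS2 : ‖S‖ ^ 2 ≤ 2 * C₀ ^ 2 * (1 + ‖x‖ ^ 2) := by
    have : ‖S‖ ^ 2 ≤ (C₀ * (1 + ‖x‖)) ^ 2 := by gcongr
    nlinarith [mul_nonneg (sq_nonneg C₀) (sq_nonneg (‖x‖ - 1))]
  have hform := diffusionTrace_le (inner_radialHess_le (zero_le_one.trans hl) x) S
  generalize radialSlope l x = m at *
  generalize radialProfile l x = χ at *
  calc _ ≤ χ * (2 * m + 4 * m ^ 2) / (1 + ‖x‖ ^ 2) * ‖S‖ ^ 2 := hform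
    _ ≤ χ * (2 * m ^ 2 + 4 * m ^ 2) / (1 + ‖x‖ ^ 2) * (2 * C₀ ^ 2 * (1 + ‖x‖ ^ 2)) := by gcongr
    _ = 12 * C₀ ^ 2 * (m ^ 2 * χ) := by
        field_simp
        ring

lemma extremalGenerator_radialProfile_le (hC₀ : 0 ≤ C₀) (hC : 0 ≤ C) (hl : 1 ≤ l) {x b : Eucl n}
    {S : Matrix (Fin n) (Fin d) ℝ} (hb : ‖b‖ ≤ C₀ * (1 + ‖x‖)) (hS : ‖S‖ ≤ C₀ * (1 + ‖x‖)) :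
    extremalGenerator C S b (radialGrad l x) (radialHess l x) ≤
      (6 * C₀ ^ 2 + 4 * C₀ + 4 * C * C₀) * (radialSlope l x ^ 2 * radialProfile l x) := by
  have htrace := diffusionTrace_radialHess_le hl hS
  have hdrift := (real_inner_le_norm (radialGrad l x) b).trans (norm_radialGrad_mul_le hC₀ hl hb)
  have hdriver := mul_le_mul_of_nonneg_left (norm_radialGrad_mul_le hC₀ hl hS) hC
  have hmm : (4 * C₀ + 4 * C * C₀) * (radialSlope l x * radialProfile l x) ≤
      (4 * C₀ + 4 * C * C₀) * (radialSlope l x ^ 2 * radialProfile l x) := by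
    have hχ := one_le_radialProfile (zero_le_one.trans hl) x
    gcongr
    exact le_self_pow₀ (one_le_radialSlope hl x) two_ne_zero
  unfold extremalGenerator
  linarith

/-- The barrier function `exp ((log √(1 + |x|²) + 1)² / (c (t - t₁)))`. -/
def barrier (c t₁ : ℝ) (z : ℝ × Eucl n) : ℝ := radialProfile (c * (z.1 - t₁))⁻¹ z.2

lemma contDiffAt_barrier (hc : 0 < c) {z : ℝ × Eucl n} (hz : t₁ < z.1) :
    ContDiffAt ℝ 3 (barrier c t₁) z := by
  unfold barrier radialProfile logWeight
  refine (ContDiffAt.mul ?_ (ContDiffAt.pow ?_ 2)).exp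
  · exact (contDiffAt_const.mul (contDiffAt_fst.sub contDiffAt_const)).inv
      (mul_pos hc (sub_pos.2 hz)).ne'
  · exact (((contDiffAt_const.add (contDiffAt_snd.norm_sq ℝ)).log (by positivity)).div_const
      2).add contDiffAt_const

lemma hasDerivAt_barrier (hc : 0 < c) {z : ℝ × Eucl n} (hz : t₁ < z.1) :
    HasDerivAt (fun s => barrier c t₁ (s, z.2))
      (-(c * (radialSlope (c * (z.1 - t₁))⁻¹ z.2 ^ 2 * barrier c t₁ z))) z.1 := by
  have hne : c * (z.1 - t₁) ≠ 0 := (mul_pos hc (sub_pos.2 hz)).ne'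
  have h : HasDerivAt (fun s => c * (s - t₁)) (c * 1) z.1 :=
    ((hasDerivAt_id z.1).sub_const t₁).const_mul c
  refine ((h.inv hne).mul_const (logWeight (‖z.2‖ ^ 2) ^ 2)).exp.congr_deriv ?_
  simp only [radialSlope, barrier, radialProfile, Pi.inv_apply]
  field_simp

lemma hasParabolicJet_barrier (hc : 0 < c) {z : ℝ × Eucl n} (hz : t₁ < z.1) :
    HasParabolicJet (barrier c t₁) z
      (-(c * (radialSlope (c * (z.1 - t₁))⁻¹ z.2 ^ 2 * barrier c t₁ z)))
      (radialGrad (c * (z.1 - t₁))⁻¹ z.2) (radialHess (c * (z.1 - t₁))⁻¹ z.2) :=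
  ⟨contDiffAt_barrier hc hz, hasDerivAt_barrier hc hz, radialGrad _, rfl,
    Eventually.of_forall (hasGradientAt_radialProfile (c * (z.1 - t₁))⁻¹),
    hasFDerivAt_radialGrad _ _⟩

/-- `χ` is, at `z`, a strict supersolution of the sublinear equation governing the difference of
two solutions, when `C` is a Lipschitz constant of the driver. -/
def IsStrictBarrierAt {U V : Type*} (C : ℝ) (b : ℝ → Eucl n → U → V → Eucl n)
    (σ : ℝ → Eucl n → U → V → Matrix (Fin n) (Fin d) ℝ) (χ : ℝ × Eucl n → ℝ) (z : ℝ × Eucl n) :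
    Prop :=
  ∃ a p A, HasParabolicJet χ z a p A ∧ ∀ u v,
    a + extremalGenerator C (σ z.1 z.2 u v) (b z.1 z.2 u v) p A ≤ -((C + 1) * χ z)

lemma isStrictBarrierAt_barrier {U V : Type*} {b : ℝ → Eucl n → U → V → Eucl n}
    {σ : ℝ → Eucl n → U → V → Matrix (Fin n) (Fin d) ℝ} {z : ℝ × Eucl n} (hC₀ : 0 ≤ C₀)
    (hC : 0 ≤ C) (hc : 6 * C₀ ^ 2 + 4 * C₀ + 4 * C * C₀ + (C + 1) ≤ c)
    (hl : 1 ≤ (c * (z.1 - t₁))⁻¹) (hb : ∀ u v, ‖b z.1 z.2 u v‖ ≤ C₀ * (1 + ‖z.2‖))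
    (hσ : ∀ u v, ‖σ z.1 z.2 u v‖ ≤ C₀ * (1 + ‖z.2‖)) :
    IsStrictBarrierAt C b σ (barrier c t₁) z := by
  have hc0 : 0 < c := lt_of_lt_of_le (by positivity) hc
  have hz : t₁ < z.1 :=
    sub_pos.1 ((mul_pos_iff_of_pos_left hc0).1 (inv_pos.1 (zero_lt_one.trans_le hl)))
  refine ⟨_, _, _, hasParabolicJet_barrier hc0 hz, fun u v => ?_⟩
  have hgen := extremalGenerator_radialProfile_le hC₀ hC hl (hb u v) (hσ u v)
  have hχ : 1 ≤ barrier c t₁ z := one_le_radialProfile (zero_le_one.trans hl) z.2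
  have hm : 1 ≤ radialSlope (c * (z.1 - t₁))⁻¹ z.2 ^ 2 := one_le_pow₀ (one_le_radialSlope hl z.2)
  have hmχ : barrier c t₁ z ≤ radialSlope (c * (z.1 - t₁))⁻¹ z.2 ^ 2 * barrier c t₁ z :=
    le_mul_of_one_le_left (zero_le_one.trans hχ) hm
  change _ ≤ _ * (_ * barrier c t₁ z) at hgen
  have hcmul := mul_le_mul_of_nonneg_right hc ((zero_le_one.trans hχ).trans hmχ)
  have hCmul := mul_le_mul_of_nonneg_left hmχ (by linarith : 0 ≤ C + 1)
  linarith

end Barrier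

section LipschitzFamilies

variable {P M U V : Type*} [NormedAddCommGroup P] [NormedAddCommGroup M] [TopologicalSpace U]
  [TopologicalSpace V] {T C C' : ℝ} {g : ℝ → P → U → V → M}

/-- The regularity asked of the coefficients: `g t p u v` is continuous in `(t, u, v)` on
`[0, T] × U × V` for every `p`, and `C`-Lipschitz in `p` uniformly in `(t, u, v)`. -/
structure IsLipschitzFamily (T C : ℝ) (g : ℝ → P → U → V → M) : Prop where
  continuousOn : ∀ p, ContinuousOn (fun q : ℝ × U × V => g q.1 p q.2.1 q.2.2)
    (Set.Icc 0 T ×ˢ Set.univ)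
  norm_sub_le : ∀ t ∈ Set.Icc 0 T, ∀ p p' u v, ‖g t p u v - g t p' u v‖ ≤ C * ‖p - p'‖

namespace IsLipschitzFamily

lemma mono (hg : IsLipschitzFamily T C g) (hC : C ≤ C') : IsLipschitzFamily T C' g :=
  ⟨hg.continuousOn, fun t ht p p' u v => (hg.norm_sub_le t ht p p' u v).trans (by gcongr)⟩

lemma continuousOn_prod (hg : IsLipschitzFamily T C g) (S : Set P) :
    ContinuousOn (fun q : P × ℝ × U × V => g q.2.1 q.1 q.2.2.1 q.2.2.2)
      (S ×ˢ (Set.Icc 0 T ×ˢ Set.univ)) := by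
  refine continuousOn_prod_of_continuousOn_lipschitzOnWith _ C.toNNReal
    (fun p _ => hg.continuousOn p) ?_
  rintro ⟨t, u, v⟩ ⟨ht, -⟩
  refine LipschitzOnWith.of_dist_le_mul fun p _ p' _ => ?_
  rw [dist_eq_norm, dist_eq_norm]
  exact (hg.norm_sub_le t ht p p' u v).trans
    (mul_le_mul_of_nonneg_right (Real.le_coe_toNNReal C) (norm_nonneg _))

variable [CompactSpace U] [CompactSpace V]

lemma exists_norm_le (hg : IsLipschitzFamily T C g) (p : P) :
    ∃ B, ∀ t ∈ Set.Icc 0 T, ∀ u v, ‖g t p u v‖ ≤ B := by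
  obtain ⟨B, hB⟩ :=
    (isCompact_Icc.prod isCompact_univ).exists_bound_of_continuousOn (hg.continuousOn p)
  exact ⟨B, fun t ht u v => hB (t, u, v) ⟨ht, Set.mem_univ _⟩⟩

lemma exists_linear_growth (hg : IsLipschitzFamily T C g) :
    ∃ B, ∀ t ∈ Set.Icc 0 T, ∀ p u v, ‖g t p u v‖ ≤ B * (1 + ‖p‖) := by
  obtain ⟨B, hB⟩ := hg.exists_norm_le 0
  refine ⟨max B C, fun t ht p u v => ?_⟩
  have hlip := hg.norm_sub_le t ht p 0 u v
  rw [sub_zero] at hlip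
  calc ‖g t p u v‖ ≤ ‖g t p u v - g t 0 u v‖ + ‖g t 0 u v‖ := norm_le_norm_sub_add _ _
    _ ≤ C * ‖p‖ + B := add_le_add hlip (hB t ht u v)
    _ ≤ max B C * ‖p‖ + max B C := by
        gcongr
        exacts [le_max_right _ _, le_max_left _ _]
    _ = _ := by ring

lemma exists_time_modulus (hg : IsLipschitzFamily T C g) {S : Set P} (hS : IsCompact S) {ε : ℝ}
    (hε : 0 < ε) :
    ∃ δ > 0, ∀ t ∈ Set.Icc 0 T, ∀ s ∈ Set.Icc 0 T, |t - s| ≤ δ →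
      ∀ p ∈ S, ∀ u v, ‖g t p u v - g s p u v‖ ≤ ε := by
  have := isCompact_iff_compactSpace.1 hS
  let F : C(Set.Icc 0 T × (S × U × V), M) :=
    { toFun := fun q => g q.1 q.2.1 q.2.2.1 q.2.2.2
      continuous_toFun := (hg.continuousOn_prod S).comp_continuous
        (f := fun q : Set.Icc 0 T × (S × U × V) => ((q.2.1 : P), (q.1 : ℝ), q.2.2))
        (by fun_prop) fun q => ⟨q.2.1.2, q.1.2, Set.mem_univ _⟩ }
  obtain ⟨δ, hδ, hF⟩ := Metric.uniformContinuous_iff.1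
    (CompactSpace.uniformContinuous_of_continuous F.curry.continuous) ε hε
  refine ⟨δ / 2, half_pos hδ, fun t ht s hs hts p hp u v => ?_⟩
  rw [← dist_eq_norm]
  have hdist := hF (a := ⟨t, ht⟩) (b := ⟨s, hs⟩) (hts.trans_lt (half_lt_self hδ))
  exact (ContinuousMap.dist_apply_le_dist (⟨p, hp⟩, u, v)).trans hdist.le

lemma exists_modulus (hg : IsLipschitzFamily T C g) {S : Set P} (hS : IsCompact S) {ε : ℝ}
    (hε : 0 < ε) :
    ∃ δ > 0, ∀ t ∈ Set.Icc 0 T, ∀ s ∈ Set.Icc 0 T, |t - s| ≤ δ →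
      ∀ p, ∀ p' ∈ S, ∀ u v, ‖g t p u v - g s p' u v‖ ≤ C * ‖p - p'‖ + ε := by
  obtain ⟨δ, hδ, h⟩ := hg.exists_time_modulus hS hε
  exact ⟨δ, hδ, fun t ht s hs hts p p' hp' u v =>
    (norm_sub_le_norm_sub_add_norm_sub _ _ _).trans
      (add_le_add (hg.norm_sub_le t ht p p' u v) (h t ht s hs hts p' hp' u v))⟩

end IsLipschitzFamily

end LipschitzFamilies

section Hamiltonian

open Filter Topology

variable {n d : ℕ} {U V : Type*} {T C : ℝ} {b : ℝ → Eucl n → U → V → Eucl n}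
  {σ : ℝ → Eucl n → U → V → Matrix (Fin n) (Fin d) ℝ}
  {f : ℝ → Eucl n → ℝ → Eucl d → U → V → ℝ}

lemma iSup_iInf_le_iSup_iInf_add [Nonempty U] [Nonempty V] {I I' : U → V → ℝ} {m : ℝ}
    (hI : ∃ B, ∀ u v, |I u v| ≤ B) (hI' : ∃ B, ∀ u v, |I' u v| ≤ B)
    (h : ∀ u v, I u v ≤ I' u v + m) : ⨆ u, ⨅ v, I u v ≤ (⨆ u, ⨅ v, I' u v) + m := by
  obtain ⟨B, hB⟩ := hI
  obtain ⟨B', hB'⟩ := hI'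
  have hbdd (u : U) : BddBelow (Set.range (I u)) :=
    ⟨-B, Set.forall_mem_range.2 fun v => (abs_le.1 (hB u v)).1⟩
  have hbdd' (u : U) : BddBelow (Set.range (I' u)) :=
    ⟨-B', Set.forall_mem_range.2 fun v => (abs_le.1 (hB' u v)).1⟩
  have hsup : BddAbove (Set.range fun u => ⨅ v, I' u v) :=
    ⟨B', Set.forall_mem_range.2 fun u =>
      (ciInf_le (hbdd' u) (Classical.arbitrary V)).trans (abs_le.1 (hB' u _)).2⟩
  refine ciSup_le fun u => ?_
  rw [← sub_le_iff_le_add]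
  refine (le_ciInf fun v => ?_).trans (le_ciSup hsup u)
  rw [sub_le_iff_le_add]
  exact (ciInf_le (hbdd u) v).trans (h u v)

lemma lowerHamiltonian_formMatrix (t : ℝ) (x : Eucl n) (y : ℝ) (p : Eucl n)
    (A : Eucl n →L[ℝ] Eucl n) :
    lowerHamiltonian b σ f t x y p (formMatrix A) =
      ⨆ u, ⨅ v, generator (σ t x u v) (b t x u v) (fun z => f t x y z u v) p A := by
  simp only [lowerHamiltonian, generator, trace_mul_formMatrix]

variable [TopologicalSpace U] [TopologicalSpace V]

/-- Hypotheses (H4.1) and (H4.2) with a common Lipschitz constant `C`. For the driver, `(x, y, z)`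
ranges over the product space with its maximum norm. -/
structure RegularCoefficients (T C : ℝ) (b : ℝ → Eucl n → U → V → Eucl n)
    (σ : ℝ → Eucl n → U → V → Matrix (Fin n) (Fin d) ℝ)
    (f : ℝ → Eucl n → ℝ → Eucl d → U → V → ℝ) : Prop where
  nonneg : 0 ≤ C
  drift : IsLipschitzFamily T C b
  diffusion : IsLipschitzFamily T C σ
  driver : IsLipschitzFamily T C fun t (q : Eucl n × ℝ × Eucl d) => f t q.1 q.2.1 q.2.2

lemma exists_regularCoefficients
    (hb_cont : ∀ x : Eucl n, ContinuousOn (fun q : ℝ × U × V => b q.1 x q.2.1 q.2.2)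
      (Set.Icc 0 T ×ˢ Set.univ))
    (hσ_cont : ∀ x : Eucl n, ContinuousOn (fun q : ℝ × U × V => σ q.1 x q.2.1 q.2.2)
      (Set.Icc 0 T ×ˢ Set.univ))
    (hbσ_lip : ∃ C > 0, ∀ t ∈ Set.Icc 0 T, ∀ x x' u v,
      ‖b t x u v - b t x' u v‖ + ‖σ t x u v - σ t x' u v‖ ≤ C * ‖x - x'‖)
    (hf_cont : ∀ x y z, ContinuousOn (fun q : ℝ × U × V => f q.1 x y z q.2.1 q.2.2)
      (Set.Icc 0 T ×ˢ Set.univ))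
    (hf_lip : ∃ C > 0, ∀ t ∈ Set.Icc 0 T, ∀ x x' y y' z z' u v,
      |f t x y z u v - f t x' y' z' u v| ≤ C * (‖x - x'‖ + |y - y'| + ‖z - z'‖)) :
    ∃ C, RegularCoefficients T C b σ f := by
  obtain ⟨C₁, hC₁, hbσ⟩ := hbσ_lip
  obtain ⟨C₂, hC₂, hf⟩ := hf_lip
  have hb : IsLipschitzFamily T C₁ b := ⟨hb_cont, fun t ht x x' u v =>
    (le_add_of_nonneg_right (norm_nonneg _)).trans (hbσ t ht x x' u v)⟩
  have hσ : IsLipschitzFamily T C₁ σ := ⟨hσ_cont, fun t ht x x' u v =>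
    (le_add_of_nonneg_left (norm_nonneg _)).trans (hbσ t ht x x' u v)⟩
  have hdriver : IsLipschitzFamily T (C₂ * 3)
      fun t (q : Eucl n × ℝ × Eucl d) => f t q.1 q.2.1 q.2.2 := by
    refine ⟨fun q => hf_cont q.1 q.2.1 q.2.2, fun t ht q q' u v => ?_⟩
    have hx : ‖q.1 - q'.1‖ ≤ ‖q - q'‖ := norm_fst_le (q - q')
    have hsnd := norm_snd_le (q - q')
    have hy : |q.2.1 - q'.2.1| ≤ ‖q - q'‖ := (norm_fst_le (q - q').2).trans hsnd
    have hz : ‖q.2.2 - q'.2.2‖ ≤ ‖q - q'‖ := (norm_snd_le (q - q').2).trans hsnd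
    rw [mul_assoc]
    refine (hf t ht q.1 q'.1 q.2.1 q'.2.1 q.2.2 q'.2.2 u v).trans
      (mul_le_mul_of_nonneg_left ?_ hC₂.le)
    linarith
  exact ⟨max C₁ (C₂ * 3), hC₁.le.trans (le_max_left _ _), hb.mono (le_max_left _ _),
    hσ.mono (le_max_left _ _), hdriver.mono (le_max_right _ _)⟩

namespace RegularCoefficients

lemma abs_driver_sub_le (H : RegularCoefficients T C b σ f) {t : ℝ} (ht : t ∈ Set.Icc 0 T)
    (x : Eucl n) (y : ℝ) (z z' : Eucl d) (u : U) (v : V) :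
    |f t x y z u v - f t x y z' u v| ≤ C * ‖z - z'‖ := by
  simpa [Prod.norm_def] using H.driver.norm_sub_le t ht (x, y, z) (x, y, z') u v

variable [CompactSpace U] [CompactSpace V]

lemma exists_coefficient_growth (H : RegularCoefficients T C b σ f) :
    ∃ C₀ ≥ 0, ∀ t ∈ Set.Icc 0 T, ∀ x u v,
      ‖b t x u v‖ ≤ C₀ * (1 + ‖x‖) ∧ ‖σ t x u v‖ ≤ C₀ * (1 + ‖x‖) := by
  obtain ⟨B, hB⟩ := H.drift.exists_linear_growth
  obtain ⟨B', hB'⟩ := H.diffusion.exists_linear_growth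
  refine ⟨max 0 (max B B'), le_max_left _ _, fun t ht x u v =>
    ⟨(hB t ht x u v).trans ?_, (hB' t ht x u v).trans ?_⟩⟩
  all_goals gcongr
  exacts [(le_max_left _ _).trans (le_max_right _ _), (le_max_right _ _).trans (le_max_right _ _)]

lemma exists_modulus (H : RegularCoefficients T C b σ f) (R : ℝ) {ε : ℝ} (hε : 0 < ε) :
    ∃ δ > 0, ∀ t ∈ Set.Icc 0 T, ∀ s ∈ Set.Icc 0 T, |t - s| ≤ δ →
      ∀ x x' : Eucl n, ‖x'‖ ≤ R → ∀ u v,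
        ‖b t x u v - b s x' u v‖ ≤ C * ‖x - x'‖ + ε ∧
        ‖σ t x u v - σ s x' u v‖ ≤ C * ‖x - x'‖ + ε ∧
        ∀ y y' z, |y'| ≤ R → ‖z‖ ≤ R →
          f t x y z u v - f s x' y' z u v ≤ C * (‖x - x'‖ + |y - y'|) + ε := by
  obtain ⟨δ₁, hδ₁, hb⟩ := H.drift.exists_modulus (isCompact_closedBall 0 R) hε
  obtain ⟨δ₂, hδ₂, hσ⟩ := H.diffusion.exists_modulus (isCompact_closedBall 0 R) hε
  obtain ⟨δ₃, hδ₃, hf⟩ := H.driver.exists_modulus (isCompact_closedBall 0 R) hε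
  refine ⟨min δ₁ (min δ₂ δ₃), by positivity, fun t ht s hs hts x x' hx' u v => ?_⟩
  rw [le_min_iff, le_min_iff] at hts
  have hx'R := mem_closedBall_zero_iff.2 hx'
  refine ⟨hb t ht s hs hts.1 x x' hx'R u v, hσ t ht s hs hts.2.1 x x' hx'R u v,
    fun y y' z hy' hz => ?_⟩
  have hdriver := hf t ht s hs hts.2.2 (x, y, z) (x', y', z)
    (mem_closedBall_zero_iff.2 (max_le hx' (max_le hy' hz))) u v
  have hnorm : ‖((x, y, z) : Eucl n × ℝ × Eucl d) - (x', y', z)‖ ≤ ‖x - x'‖ + |y - y'| := by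
    simp [Prod.norm_def]
  exact (le_abs_self _).trans (hdriver.trans
    (add_le_add_left (mul_le_mul_of_nonneg_left hnorm H.nonneg) ε))

lemma exists_abs_generator_le (H : RegularCoefficients T C b σ f) {t : ℝ}
    (ht : t ∈ Set.Icc 0 T) (x : Eucl n) (y : ℝ) (p : Eucl n) (A : Eucl n →L[ℝ] Eucl n) :
    ∃ B, ∀ u v, |generator (σ t x u v) (b t x u v) (fun z => f t x y z u v) p A| ≤ B := by
  obtain ⟨B₁, hb⟩ := H.drift.exists_norm_le x
  obtain ⟨B₂, hσ⟩ := H.diffusion.exists_norm_le x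
  obtain ⟨B₃, hf⟩ := H.driver.exists_norm_le (x, y, 0)
  refine ⟨_, fun u v => abs_generator_le H.nonneg (H.abs_driver_sub_le ht x y · · u v)
    (B := max B₁ (max B₂ B₃)) ((hσ t ht u v).trans ?_) ((hb t ht u v).trans ?_)
    ((hf t ht u v).trans ?_)⟩
  exacts [(le_max_left _ _).trans (le_max_right _ _), le_max_left _ _,
    (le_max_right _ _).trans (le_max_right _ _)]

variable [Nonempty U] [Nonempty V]

lemma lowerHamiltonian_le_add (H : RegularCoefficients T C b σ f) {t s : ℝ}
    (ht : t ∈ Set.Icc 0 T) (hs : s ∈ Set.Icc 0 T) {x x' p p' : Eucl n} {y y' m : ℝ}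
    {A A' : Eucl n →L[ℝ] Eucl n}
    (h : ∀ u v, generator (σ t x u v) (b t x u v) (fun z => f t x y z u v) p A ≤
      generator (σ s x' u v) (b s x' u v) (fun z => f s x' y' z u v) p' A' + m) :
    lowerHamiltonian b σ f t x y p (formMatrix A) ≤
      lowerHamiltonian b σ f s x' y' p' (formMatrix A') + m := by
  rw [lowerHamiltonian_formMatrix, lowerHamiltonian_formMatrix]
  exact iSup_iInf_le_iSup_iInf_add (H.exists_abs_generator_le ht x y p A)
    (H.exists_abs_generator_le hs x' y' p' A') h

variable {z : ℝ × Eucl n} {χ φ : ℝ × Eucl n → ℝ} {w : ℝ → Eucl n → ℝ} {θ a y : ℝ} {p : Eucl n}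
  {A : Eucl n →L[ℝ] Eucl n}

lemma exists_lowerHamiltonian_add_smul_le (H : RegularCoefficients T C b σ f)
    (hz : z.1 ∈ Set.Icc 0 T) (hχ : IsStrictBarrierAt C b σ χ z) (hθ : 0 ≤ θ) :
    ∃ a' p' A', HasParabolicJet χ z a' p' A' ∧ ∀ y p A,
      θ * a' + lowerHamiltonian b σ f z.1 z.2 y (p + θ • p') (formMatrix (A + θ • A')) ≤
        lowerHamiltonian b σ f z.1 z.2 y p (formMatrix A) - θ * ((C + 1) * χ z) := by
  obtain ⟨a', p', A', hjet, hstrict⟩ := hχ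
  refine ⟨a', p', A', hjet, fun y p A => ?_⟩
  have hgen : lowerHamiltonian b σ f z.1 z.2 y (p + θ • p') (formMatrix (A + θ • A')) ≤
      lowerHamiltonian b σ f z.1 z.2 y p (formMatrix A) + -(θ * (a' + (C + 1) * χ z)) := by
    refine H.lowerHamiltonian_le_add hz hz fun u v => ?_
    refine (generator_add_le H.nonneg (H.abs_driver_sub_le hz z.2 y · · u v)).trans ?_
    rw [extremalGenerator_smul hθ, ← mul_neg]
    gcongr
    linarith [hstrict u v]
  linarith

lemma mul_le_of_isTouchingSubsolution (H : RegularCoefficients T C b σ f)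
    (hw : IsTouchingSubsolution T (lowerHamiltonian b σ f) w) (hz : z.1 ∈ Set.Ico 0 T)
    (hχ : IsStrictBarrierAt C b σ χ z) (hθ : 0 ≤ θ) (hφ : HasParabolicJet φ z a p A)
    (hle : ∀ᶠ z' in 𝓝[Set.Icc 0 T ×ˢ Set.univ] z,
      w z'.1 z'.2 - θ * χ z' ≤ w z.1 z.2 - θ * χ z + (φ z' - φ z)) :
    θ * ((C + 1) * χ z) ≤ a + lowerHamiltonian b σ f z.1 z.2 (w z.1 z.2) p (formMatrix A) := by
  obtain ⟨a', p', A', hjet, hH⟩ :=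
    H.exists_lowerHamiltonian_add_smul_le (Set.Ico_subset_Icc_self hz) hχ hθ
  have hpos := hw.nonneg_of_hasParabolicJet hz (hφ.add (hjet.const_mul θ)) (by
    filter_upwards [hle] with z' hz'
    linarith)
  linarith [hH (w z.1 z.2) p A]

lemma add_mul_le_of_isTouchingSupersolution (H : RegularCoefficients T C b σ f)
    (hw : IsTouchingSupersolution T (lowerHamiltonian b σ f) w) (hz : z.1 ∈ Set.Ico 0 T)
    (hχ : IsStrictBarrierAt C b σ χ z) (hθ : 0 ≤ θ) (hφ : HasParabolicJet φ z a p A)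
    (hle : ∀ᶠ z' in 𝓝[Set.Icc 0 T ×ˢ Set.univ] z,
      w z.1 z.2 + θ * χ z + (φ z' - φ z) ≤ w z'.1 z'.2 + θ * χ z') :
    a + lowerHamiltonian b σ f z.1 z.2 (w z.1 z.2) p (formMatrix A) + θ * ((C + 1) * χ z) ≤ 0 := by
  obtain ⟨a', p', A', hjet, hH⟩ :=
    H.exists_lowerHamiltonian_add_smul_le (Set.Ico_subset_Icc_self hz) hχ hθ
  have hneg := hw.nonpos_of_hasParabolicJet hz (hφ.add (hjet.const_mul (-θ))) (by
    filter_upwards [hle] with z' hz'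
    linarith)
  have hle := hH (w z.1 z.2) (p + -θ • p') (A + -θ • A')
  simp only [neg_smul, neg_add_cancel_right] at hle hneg
  linarith

end RegularCoefficients

end Hamiltonian

section Contact

open Filter Topology

variable {n d : ℕ} {T C r a e : ℝ}

lemma exists_pos_le_and_mul_le {δ κ : ℝ} (hδ : 0 < δ) (hκ : 0 < κ) (N : ℝ) :
    ∃ r > 0, r ≤ δ ∧ r * N ≤ κ := by
  have hr : 0 < min δ (κ / (|N| + 1)) := lt_min hδ (by positivity)
  refine ⟨_, hr, min_le_left _ _, ?_⟩
  calc _ ≤ min δ (κ / (|N| + 1)) * (|N| + 1) :=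
        mul_le_mul_of_nonneg_left ((le_abs_self N).trans (le_add_of_nonneg_right zero_le_one)) hr.le
    _ ≤ κ / (|N| + 1) * (|N| + 1) := by gcongr; exact min_le_right _ _
    _ = κ := div_mul_cancel₀ κ (by positivity)

lemma exists_isDoublingPoint_rescale {K : Set (ℝ × Eucl n)} {u v : ℝ × Eucl n → ℝ}
    (hK : IsCompact K) (hu : ContinuousOn u K) (hv : ContinuousOn v K) (hle : ∀ z ∈ K, u z ≤ v z)
    {z₀ : ℝ × Eucl n} (hz₀ : z₀ ∈ K) (hcontact : u z₀ = v z₀) {κ : ℝ} (hκ : 0 < κ) (hκ₁ : κ ≤ 1)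
    {δ : ℝ → ℝ} (hδ : ∀ e, 0 < e → 0 < δ e) (N : ℝ → ℝ → ℝ) :
    ∃ e, ∃ he : 0 < e, e ≤ 1 ∧ ∃ a, ∃ ha : 0 < a, a ≤ δ e ∧
      ∃ r, 0 < r ∧ r ≤ 1 / 2 ∧ r * N e a ≤ κ ∧ ∃ ξ η q q' X Y,
        IsDoublingPoint (rescale ha.ne' he.ne') K u v r ξ η q q' X Y ∧
        ‖rescale ha.ne' he.ne' (ξ - η)‖ ≤ κ ∧ |u ξ - v η| ≤ κ ∧
        -κ ≤ u ξ - v ξ ∧ -κ ≤ u η - v η := by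
  obtain ⟨δ₀, hδ₀, hdouble⟩ := exists_isDoublingPoint_of_contact (E := TimeSpace n) hK hu hv hle
    hz₀ hcontact (pow_pos hκ 2)
  have he : 0 < min δ₀ 1 := lt_min hδ₀ one_pos
  have ha : 0 < min δ₀ (δ (min δ₀ 1)) := lt_min hδ₀ (hδ _ he)
  obtain ⟨r, hr, hrδ, hrN⟩ := exists_pos_le_and_mul_le (lt_min hδ₀ one_half_pos) hκ (N _ _)
  obtain ⟨ξ, η, q, q', X, Y, D, hJ, hval, hξ, hη⟩ := hdouble (rescale ha.ne' he.ne')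
    (norm_le_mul_norm_rescale ha he (min_le_left _ _) (min_le_left _ _)) r hr
    (hrδ.trans (min_le_left _ _))
  have hsq : κ ^ 2 ≤ κ := pow_le_of_le_one hκ.le hκ₁ two_ne_zero
  exact ⟨_, he, min_le_right _ _, _, ha, min_le_right _ _, r, hr, hrδ.trans (min_le_right _ _), hrN,
    ξ, η, q, q', X, Y, D, (sq_le_sq₀ (norm_nonneg _) hκ.le).1 hJ, hval.trans hsq,
    (neg_le_neg hsq).trans hξ, (neg_le_neg hsq).trans hη⟩

section DoublingPoint

variable {K : Set (ℝ × Eucl n)} {w w' : ℝ × Eucl n → ℝ} {ha : a ≠ 0} {he : e ≠ 0}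
  {ξ η : ℝ × Eucl n} {q q' : TimeSpace n} {X Y : TimeSpace n →L[ℝ] TimeSpace n}

namespace IsDoublingPoint

lemma norm_sub_le (D : IsDoublingPoint (rescale ha he) K w w' r ξ η q q' X Y) :
    ‖q - q'‖ ≤ 2 * r := by
  have h := norm_sub_le_of_le D.norm_left_le D.norm_right_le
  rwa [sub_sub_sub_cancel_right, ← two_mul] at h

lemma norm_le_one (D : IsDoublingPoint (rescale ha he) K w w' r ξ η q q' X Y)
    (hξη : ‖rescale ha he (ξ - η)‖ ≤ 1) (hr : r ≤ 1 / 2) : ‖q‖ ≤ 1 ∧ ‖q'‖ ≤ 1 := by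
  have hthird : ‖(1 / 3 : ℝ) • rescale ha he (ξ - η)‖ ≤ 1 / 3 := by
    rw [norm_smul, Real.norm_of_nonneg (by norm_num)]
    linarith
  constructor
  · linarith [norm_le_norm_add_norm_sub' q ((1 / 3 : ℝ) • rescale ha he (ξ - η)), D.norm_left_le]
  · linarith [norm_le_norm_add_norm_sub' q' ((1 / 3 : ℝ) • rescale ha he (ξ - η)), D.norm_right_le]

lemma exists_hasParabolicJet (D : IsDoublingPoint (rescale ha he) K w w' r ξ η q q' X Y) :
    ∃ A A' : Eucl n →L[ℝ] Eucl n,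
      HasParabolicJet (fun z => quadPoly q X (rescale ha he (z - ξ))) ξ
        (a⁻¹ * q.fst) (e⁻¹ • q.snd) A ∧
      HasParabolicJet (fun z => quadPoly q' Y (rescale ha he (z - η))) η
        (a⁻¹ * q'.fst) (e⁻¹ • q'.snd) A' ∧
      ∀ h k, ⟪A h, h⟫ - ⟪A' k, k⟫ ≤ (e⁻¹) ^ 2 * (‖h - k‖ ^ 2 + r * (‖h‖ ^ 2 + ‖k‖ ^ 2)) := by
  obtain ⟨A, hA, hXA⟩ :=
    exists_hasParabolicJet_quadPoly q X (rescale ha he).toContinuousLinearMap ξ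
  obtain ⟨A', hA', hYA'⟩ :=
    exists_hasParabolicJet_quadPoly q' Y (rescale ha he).toContinuousLinearMap η
  rw [adjoint_rescale_comp_inr, ContinuousLinearEquiv.coe_coe, inner_rescale_one_zero] at hA hA'
  refine ⟨A, A', hA, hA', fun h k => ?_⟩
  have hsub : rescale ha he (0, h - k) = rescale ha he (0, h) - rescale ha he (0, k) := by
    rw [← map_sub, Prod.mk_sub_mk, sub_zero]
  calc ⟪A h, h⟫ - ⟪A' k, k⟫
    _ ≤ ‖rescale ha he (0, h - k)‖ ^ 2 +
        r * (‖rescale ha he (0, h)‖ ^ 2 + ‖rescale ha he (0, k)‖ ^ 2) := by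
      rw [hXA, hYA', hsub]
      exact D.inner_sub_inner_le _ _
    _ = _ := by
      simp only [norm_rescale_zero_sq]
      ring

end IsDoublingPoint

end DoublingPoint

variable {U V : Type*} {b : ℝ → Eucl n → U → V → Eucl n}
  {σ : ℝ → Eucl n → U → V → Matrix (Fin n) (Fin d) ℝ}
  {f : ℝ → Eucl n → ℝ → Eucl d → U → V → ℝ} {w₁ w₂ : ℝ → Eucl n → ℝ} {χ : ℝ × Eucl n → ℝ}
  {K : Set (ℝ × Eucl n)} {θ : ℝ}
  [TopologicalSpace U] [TopologicalSpace V] [CompactSpace U] [CompactSpace V]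

namespace RegularCoefficients

lemma exists_coefficient_bound (H : RegularCoefficients T C b σ f) (hK : IsCompact K)
    (hKT : K ⊆ Set.Icc 0 T ×ˢ Set.univ) :
    ∃ B, ∀ z ∈ K, ∀ u v, ‖b z.1 z.2 u v‖ ≤ B ∧ ‖σ z.1 z.2 u v‖ ≤ B := by
  obtain ⟨C₀, hC₀, hgrowth⟩ := H.exists_coefficient_growth
  obtain ⟨R, hR⟩ := hK.exists_bound_of_continuousOn continuousOn_snd
  refine ⟨C₀ * (1 + R), fun z hz u v => ?_⟩
  have hle : C₀ * (1 + ‖z.2‖) ≤ C₀ * (1 + R) := by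
    gcongr
    exact hR z hz
  exact (hgrowth z.1 (hKT hz).1 z.2 u v).imp hle.trans' hle.trans'

lemma exists_modulus_on_compact (H : RegularCoefficients T C b σ f) (hK : IsCompact K)
    (hKT : K ⊆ Set.Icc 0 T ×ˢ Set.univ) (hw₂ : ContinuousOn (fun z => w₂ z.1 z.2) K) (R : ℝ)
    {ε : ℝ} (hε : 0 < ε) :
    ∃ δ > 0, ∀ ξ ∈ K, ∀ η ∈ K, |ξ.1 - η.1| ≤ δ → ∀ u v,
      ‖b ξ.1 ξ.2 u v - b η.1 η.2 u v‖ ≤ C * ‖ξ.2 - η.2‖ + ε ∧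
      ‖σ ξ.1 ξ.2 u v - σ η.1 η.2 u v‖ ≤ C * ‖ξ.2 - η.2‖ + ε ∧
      ∀ y z, ‖z‖ ≤ R → f ξ.1 ξ.2 y z u v - f η.1 η.2 (w₂ η.1 η.2) z u v ≤
        C * (‖ξ.2 - η.2‖ + |y - w₂ η.1 η.2|) + ε := by
  obtain ⟨R₁, hR₁⟩ := hK.exists_bound_of_continuousOn continuousOn_snd
  obtain ⟨R₂, hR₂⟩ := hK.exists_bound_of_continuousOn hw₂
  obtain ⟨δ, hδ, hmod⟩ := H.exists_modulus (max R (max R₁ R₂)) hε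
  refine ⟨δ, hδ, fun ξ hξ η hη hξη u v => ?_⟩
  obtain ⟨hb, hσ, hf⟩ := hmod ξ.1 (hKT hξ).1 η.1 (hKT hη).1 hξη ξ.2 η.2
    (le_max_of_le_right (le_max_of_le_left (hR₁ η hη))) u v
  exact ⟨hb, hσ, fun y z hz => hf y _ z
    (le_max_of_le_right (le_max_of_le_right (hR₂ η hη))) (le_max_of_le_left hz)⟩

variable [Nonempty U] [Nonempty V]

lemma mul_barrier_le_of_isDoublingPoint (H : RegularCoefficients T C b σ f)
    (hw₁ : IsTouchingSubsolution T (lowerHamiltonian b σ f) w₁)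
    (hw₂ : IsTouchingSupersolution T (lowerHamiltonian b σ f) w₂) (ha : 0 < a) (he : 0 < e)
    (hθ : 0 ≤ θ) (hr : 0 ≤ r) (hr' : r ≤ 1 / 2) {ξ η : ℝ × Eucl n} {q q' : TimeSpace n}
    {X Y : TimeSpace n →L[ℝ] TimeSpace n}
    (D : IsDoublingPoint (rescale ha.ne' he.ne') K (fun z => w₁ z.1 z.2 - θ * χ z)
      (fun z => w₂ z.1 z.2 + θ * χ z) r ξ η q q' X Y)
    (hξη : ‖rescale ha.ne' he.ne' (ξ - η)‖ ≤ 1)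
    (hξ : ξ.1 ∈ Set.Ico 0 T) (hη : η.1 ∈ Set.Ico 0 T)
    (hKξ : K ∈ 𝓝[Set.Icc 0 T ×ˢ Set.univ] ξ) (hKη : K ∈ 𝓝[Set.Icc 0 T ×ˢ Set.univ] η)
    (hχξ : IsStrictBarrierAt C b σ χ ξ) (hχη : IsStrictBarrierAt C b σ χ η) {B μ ρ : ℝ}
    (hB : ∀ z ∈ K, ∀ u v, ‖b z.1 z.2 u v‖ ≤ B ∧ ‖σ z.1 z.2 u v‖ ≤ B)
    (hμ : ∀ u v, ‖b ξ.1 ξ.2 u v - b η.1 η.2 u v‖ ≤ μ * e ∧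
      ‖σ ξ.1 ξ.2 u v - σ η.1 η.2 u v‖ ≤ μ * e)
    (hρ : ∀ u v z, ‖z‖ ≤ e⁻¹ * B →
      f ξ.1 ξ.2 (w₁ ξ.1 ξ.2) z u v - f η.1 η.2 (w₂ η.1 η.2) z u v ≤ ρ) :
    θ * ((C + 1) * (χ ξ + χ η)) ≤ 2 * r * a⁻¹ +
      (1 / 2 * μ ^ 2 + r * (e⁻¹ * B) ^ 2 + (1 + C) * (μ + 2 * r * (e⁻¹ * B)) + ρ) := by
  obtain ⟨A, A', hA, hA', hAA'⟩ := D.exists_hasParabolicJet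
  have hsub := H.mul_le_of_isTouchingSubsolution hw₁ hξ hχξ hθ hA
    (by simpa only [sub_self, map_zero, quadPoly_zero, sub_zero] using
      D.le_left.filter_mono (nhdsWithin_le_iff.2 hKξ))
  have hsuper := H.add_mul_le_of_isTouchingSupersolution hw₂ hη hχη hθ hA'
    (by simpa only [sub_self, map_zero, quadPoly_zero, sub_zero] using
      D.le_right.filter_mono (nhdsWithin_le_iff.2 hKη))
  obtain ⟨hq, hq'⟩ := D.norm_le_one hξη hr'
  have hsnd (p : TimeSpace n) {s : ℝ} (hp : ‖p‖ ≤ s) : ‖e⁻¹ • p.snd‖ ≤ s * e⁻¹ := by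
    rw [norm_smul, Real.norm_of_nonneg (inv_nonneg.2 he.le), mul_comm]
    gcongr
    exact (WithLp.norm_snd_le _ p).trans hp
  have hfst : a⁻¹ * q.fst - a⁻¹ * q'.fst ≤ 2 * r * a⁻¹ := by
    rw [← mul_sub, mul_comm]
    gcongr
    exact (le_abs_self _).trans ((WithLp.norm_fst_le _ (q - q')).trans D.norm_sub_le)
  have hham := H.lowerHamiltonian_le_add (Set.Ico_subset_Icc_self hξ) (Set.Ico_subset_Icc_self hη)
    (y := w₁ ξ.1 ξ.2) (y' := w₂ η.1 η.2) fun u v => sub_le_iff_le_add'.1 <|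
      (generator_sub_le he hr H.nonneg hAA' ((hsnd q hq).trans_eq (one_mul _))
        (by rw [← smul_sub]; exact hsnd (q - q') D.norm_sub_le)
        (hB ξ D.mem_left u v).2 (hB η D.mem_right u v).2 (hB η D.mem_right u v).1
        (hμ u v).2 (hμ u v).1 (H.abs_driver_sub_le (Set.Ico_subset_Icc_self hξ) _ _ · · u v)).trans
      (add_le_add_right (hρ u v _ ((norm_rowMul_le _ _).trans (mul_le_mul
        ((hsnd q' hq').trans_eq (one_mul _)) (hB η D.mem_right u v).2 (norm_nonneg _)
        (inv_nonneg.2 he.le)))) _)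
  linarith

lemma barrier_add_le_of_contact (H : RegularCoefficients T C b σ f)
    (hw₁ : IsTouchingSubsolution T (lowerHamiltonian b σ f) w₁)
    (hw₂ : IsTouchingSupersolution T (lowerHamiltonian b σ f) w₂) (hK : IsCompact K)
    (hKT : K ⊆ Set.Icc 0 T ×ˢ Set.univ) (hw₁K : ContinuousOn (fun z => w₁ z.1 z.2) K)
    (hw₂K : ContinuousOn (fun z => w₂ z.1 z.2) K) (hχK : ContinuousOn χ K)
    (hχ₀ : ∀ z ∈ K, 0 ≤ χ z) (hχ : ∀ z ∈ K, IsStrictBarrierAt C b σ χ z) (hθ : 0 ≤ θ)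
    {κ : ℝ} (hκ : 0 < κ) (hκ₁ : κ ≤ 1)
    (hinterior : ∀ z ∈ K, -κ ≤ w₁ z.1 z.2 - θ * χ z - (w₂ z.1 z.2 + θ * χ z) →
      z.1 < T ∧ K ∈ 𝓝[Set.Icc 0 T ×ˢ Set.univ] z)
    (hle : ∀ z ∈ K, w₁ z.1 z.2 - θ * χ z ≤ w₂ z.1 z.2 + θ * χ z) {z₀ : ℝ × Eucl n}
    (hz₀ : z₀ ∈ K) (hcontact : w₁ z₀.1 z₀.2 - θ * χ z₀ = w₂ z₀.1 z₀.2 + θ * χ z₀) :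
    ∃ ξ ∈ K, ∃ η ∈ K, θ * (χ ξ + χ η) ≤ (2 * (C + 1) ^ 2 + 2 * C + 2) * κ := by
  obtain ⟨B, hB⟩ := H.exists_coefficient_bound hK hKT
  choose! δ hδ hmod using fun e (he : 0 < e) =>
    H.exists_modulus_on_compact hK hKT hw₂K (e⁻¹ * B) (mul_pos hκ he)
  obtain ⟨e, he, he₁, a, ha, haδ, r, hr, hr', hrN, ξ, η, q, q', X, Y, D, hJ, hval, hξ, hη⟩ :=
    exists_isDoublingPoint_rescale (u := fun z => w₁ z.1 z.2 - θ * χ z)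
      (v := fun z => w₂ z.1 z.2 + θ * χ z) hK (hw₁K.sub (hχK.const_mul θ))
      (hw₂K.add (hχK.const_mul θ)) hle hz₀ hcontact hκ hκ₁ hδ
      fun e a => 2 * a⁻¹ + (e⁻¹ * B) ^ 2 + (1 + C) * (2 * (e⁻¹ * B))
  have htime : |ξ.1 - η.1| ≤ δ e := (abs_fst_le_mul_norm_rescale ha (ξ - η)).trans
    ((mul_le_of_le_one_right ha.le (hJ.trans hκ₁)).trans haδ)
  have hspace : ‖ξ.2 - η.2‖ ≤ e * κ := (norm_snd_le_mul_norm_rescale he (ξ - η)).trans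
    (mul_le_mul_of_nonneg_left hJ he.le)
  have heκ : e * κ ≤ κ := mul_le_of_le_one_left hκ.le he₁
  have hvalue : |w₁ ξ.1 ξ.2 - w₂ η.1 η.2| ≤ κ + θ * (χ ξ + χ η) := by
    have := mul_nonneg hθ (add_nonneg (hχ₀ ξ D.mem_left) (hχ₀ η D.mem_right))
    rw [abs_le] at hval ⊢
    constructor <;> linarith
  have hC := H.nonneg
  have hmodulus (u : U) (v : V) := hmod e he ξ D.mem_left η D.mem_right htime u v
  have hμ : C * ‖ξ.2 - η.2‖ + κ * e ≤ (C + 1) * κ * e := by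
    linarith [mul_le_mul_of_nonneg_left hspace hC]
  have hρ : C * (‖ξ.2 - η.2‖ + |w₁ ξ.1 ξ.2 - w₂ η.1 η.2|) + κ * e ≤
      C * (κ + (κ + θ * (χ ξ + χ η))) + κ :=
    add_le_add (mul_le_mul_of_nonneg_left (add_le_add (hspace.trans heκ) hvalue) hC)
      ((mul_comm κ e).trans_le heκ)
  obtain ⟨hξT, hKξ⟩ := hinterior ξ D.mem_left hξ
  obtain ⟨hηT, hKη⟩ := hinterior η D.mem_right hη
  have hmain := H.mul_barrier_le_of_isDoublingPoint hw₁ hw₂ ha he hθ hr.le hr' D (hJ.trans hκ₁)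
    ⟨(hKT D.mem_left).1.1, hξT⟩ ⟨(hKT D.mem_right).1.1, hηT⟩ hKξ hKη
    (hχ ξ D.mem_left) (hχ η D.mem_right) hB (fun u v => (hmodulus u v).imp hμ.trans' fun h =>
      h.1.trans hμ) fun u v z hz => ((hmodulus u v).2.2 _ z hz).trans hρ
  refine ⟨ξ, D.mem_left, η, D.mem_right, ?_⟩
  have hsq := mul_le_mul_of_nonneg_left (pow_le_of_le_one hκ.le hκ₁ two_ne_zero) (sq_nonneg (C + 1))
  linarith [mul_nonneg (sq_nonneg (C + 1)) hκ.le]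

end RegularCoefficients

end Contact

section LogarithmicGrowth

open Filter Topology

variable {n : ℕ} {c t₁ T T' A l : ℝ} {z : ℝ × Eucl n}

lemma radialProfile_mono {x : Eucl n} (hl : A ≤ l) : radialProfile A x ≤ radialProfile l x :=
  Real.exp_le_exp.2 (mul_le_mul_of_nonneg_right hl (sq_nonneg _))

lemma radialProfile_sq (x : Eucl n) : radialProfile A x ^ 2 = radialProfile (2 * A) x := by
  unfold radialProfile
  rw [← Real.exp_nat_mul]
  push_cast
  ring_nf

lemma sub_le_add_mul_radialProfile {B θ y y' : ℝ} {x : Eucl n} (hθ : 0 < θ) (hl : 2 * A ≤ l)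
    (hy : |y| ≤ B * radialProfile A x) (hy' : |y'| ≤ B * radialProfile A x) :
    y - y' ≤ B ^ 2 / θ + θ * radialProfile l x := by
  have hamgm : B ^ 2 / θ + θ * radialProfile A x ^ 2 - 2 * (B * radialProfile A x) =
      (B - θ * radialProfile A x) ^ 2 / θ := by
    field_simp
    ring
  have hnonneg : 0 ≤ (B - θ * radialProfile A x) ^ 2 / θ := by positivity
  have hsq : radialProfile A x ^ 2 ≤ radialProfile l x :=
    (radialProfile_sq x).trans_le (radialProfile_mono hl)
  linarith [le_of_abs_le hy, neg_le_of_abs_le hy', mul_le_mul_of_nonneg_left hsq hθ.le]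

lemma MemTheta.exists_abs_le {φ : ℝ → Eucl n → ℝ} (hφ : MemTheta T φ) :
    ∃ A ≥ 1, ∃ B, ∀ t ∈ Set.Icc 0 T, ∀ x, |φ t x| ≤ B * radialProfile A x := by
  obtain ⟨hcont, A, -, hdecay⟩ := hφ
  obtain ⟨R, hR⟩ := hdecay 1 one_pos
  obtain ⟨B, hB⟩ :=
    (isCompact_Icc.prod (isCompact_closedBall (0 : Eucl n) R)).exists_bound_of_continuousOn
      (hcont.mono (Set.prod_mono_right (Set.subset_univ _)))
  refine ⟨max A 1, le_max_right _ _, max B 1, fun t ht x => ?_⟩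
  have hone : 1 ≤ radialProfile (max A 1) x :=
    one_le_radialProfile (zero_le_one.trans (le_max_right _ _)) x
  rcases le_total R ‖x‖ with hx | hx
  · have hlog : Real.log ((‖x‖ ^ 2 + 1) ^ ((1 : ℝ) / 2)) = logWeight (‖x‖ ^ 2) - 1 := by
      rw [Real.log_rpow (by positivity), logWeight, add_comm (‖x‖ ^ 2)]
      ring
    have hdecay := hR t ht x hx
    rw [hlog, neg_mul, Real.exp_neg, ← div_eq_mul_inv, div_le_one (Real.exp_pos _)] at hdecay
    have hweight := one_le_logWeight (sq_nonneg ‖x‖)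
    calc |φ t x| ≤ Real.exp (A * (logWeight (‖x‖ ^ 2) - 1) ^ 2) := hdecay
      _ ≤ radialProfile (max A 1) x := by
          unfold radialProfile
          gcongr
          exacts [le_max_left _ _, sub_le_self _ zero_le_one]
      _ ≤ _ := le_mul_of_one_le_left (Real.exp_pos _).le (le_max_right _ _)
  · calc |φ t x| ≤ B := hB (t, x) ⟨ht, mem_closedBall_zero_iff.2 hx⟩
      _ ≤ max B 1 := le_max_left _ _
      _ ≤ _ := le_mul_of_one_le_right (by positivity) hone

lemma MemTheta.exists_common_abs_le {φ ψ : ℝ → Eucl n → ℝ} (hφ : MemTheta T φ)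
    (hψ : MemTheta T ψ) :
    ∃ A ≥ 1, ∃ B, ∀ t ∈ Set.Icc 0 T, ∀ x,
      |φ t x| ≤ B * radialProfile A x ∧ |ψ t x| ≤ B * radialProfile A x := by
  obtain ⟨A, hA, B, hB⟩ := hφ.exists_abs_le
  obtain ⟨A', -, B', hB'⟩ := hψ.exists_abs_le
  have enlarge {y D D' E E' : ℝ} {x : Eucl n} (hy : |y| ≤ D * radialProfile E x)
      (hD : D ≤ D') (hD' : 0 ≤ D') (hE : E ≤ E') : |y| ≤ D' * radialProfile E' x :=
    hy.trans (mul_le_mul hD (radialProfile_mono hE) (Real.exp_pos _).le hD')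
  refine ⟨max A A', hA.trans (le_max_left _ _), max 0 (max B B'), fun t ht x => ⟨?_, ?_⟩⟩
  · exact enlarge (hB t ht x) ((le_max_left _ _).trans (le_max_right _ _)) (le_max_left _ _)
      (le_max_left _ _)
  · exact enlarge (hB' t ht x) ((le_max_right _ _).trans (le_max_right _ _)) (le_max_left _ _)
      (le_max_right _ _)

lemma norm_le_exp_of_logWeight_le {x : Eucl n} {R : ℝ} (h : logWeight (‖x‖ ^ 2) ≤ R) :
    ‖x‖ ≤ Real.exp R := by
  have hlog : Real.log (1 + ‖x‖ ^ 2) ≤ 2 * R := by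
    unfold logWeight at h
    linarith
  have hsq := (Real.log_le_iff_le_exp (by positivity)).1 hlog
  refine (abs_le_of_sq_le_sq' ?_ (Real.exp_pos R).le).2
  rw [← Real.exp_nat_mul]
  push_cast
  linarith

lemma continuous_logWeight_norm_sq : Continuous fun x : Eucl n => logWeight (‖x‖ ^ 2) := by
  have h : Continuous fun x : Eucl n => 1 + ‖x‖ ^ 2 := by fun_prop
  exact ((h.log fun x => by positivity).div_const 2).add continuous_const

/-- The part of the time interval `[0, T']` where `barrier c t₁ ≤ exp l`. The condition is written
without inverses, so that it fails for all times up to `t₁`. -/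
def barrierRegion (n : ℕ) (c t₁ T' l : ℝ) : Set (ℝ × Eucl n) :=
  {z | z.1 ∈ Set.Icc 0 T' ∧ logWeight (‖z.2‖ ^ 2) ^ 2 ≤ l * (c * (z.1 - t₁))}

lemma isCompact_barrierRegion (hc : 0 ≤ c) (hl : 0 ≤ l) :
    IsCompact (barrierRegion n c t₁ T' l) := by
  refine ((isCompact_Icc (a := 0) (b := T')).prod (isCompact_closedBall (0 : Eucl n)
    (Real.exp (l * (c * (T' - t₁)) + 1)))).of_isClosed_subset ?_ ?_
  · exact (isClosed_Icc.preimage continuous_fst).inter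
      (isClosed_le ((continuous_logWeight_norm_sq.comp continuous_snd).pow 2) (by fun_prop))
  · rintro ⟨t, x⟩ ⟨ht, hx⟩
    refine ⟨ht, mem_closedBall_zero_iff.2 (norm_le_exp_of_logWeight_le ?_)⟩
    have hmono : l * (c * (t - t₁)) ≤ l * (c * (T' - t₁)) := by
      gcongr
      exact ht.2
    dsimp only at hx
    nlinarith [sq_nonneg (logWeight (‖x‖ ^ 2) - 1)]

lemma lt_of_mem_barrierRegion (hc : 0 ≤ c) (hl : 0 ≤ l) (hz : z ∈ barrierRegion n c t₁ T' l) :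
    t₁ < z.1 := by
  have hpos : 0 < l * c * (z.1 - t₁) := by
    rw [mul_assoc]
    exact lt_of_lt_of_le (by positivity [one_le_logWeight (sq_nonneg ‖z.2‖)]) hz.2
  exact sub_pos.1 (pos_of_mul_pos_right hpos (by positivity))

lemma mem_barrierRegion_iff (hc : 0 < c) (hz : t₁ < z.1) :
    z ∈ barrierRegion n c t₁ T' l ↔ z.1 ∈ Set.Icc 0 T' ∧ barrier c t₁ z ≤ Real.exp l := by
  unfold barrierRegion barrier radialProfile
  rw [Set.mem_ofPred_eq, Real.exp_le_exp, inv_mul_le_iff₀ (mul_pos hc (sub_pos.2 hz)), mul_comm l]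

lemma continuousOn_barrier (hc : 0 < c) (hl : 0 ≤ l) :
    ContinuousOn (barrier c t₁) (barrierRegion n c t₁ T' l) := fun _ hz =>
  (contDiffAt_barrier hc (lt_of_mem_barrierRegion hc.le hl hz)).continuousAt.continuousWithinAt

lemma barrierRegion_mem_nhdsWithin (hc : 0 < c) (hz₁ : t₁ < z.1) (hzT : z.1 < T')
    (hz : barrier c t₁ z < Real.exp l) :
    barrierRegion n c t₁ T' l ∈ 𝓝[Set.Icc 0 T ×ˢ Set.univ] z := by
  filter_upwards [
    (continuousAt_const.eventually_lt continuousAt_fst hz₁).filter_mono nhdsWithin_le_nhds,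
    (continuousAt_fst.eventually_lt continuousAt_const hzT).filter_mono nhdsWithin_le_nhds,
    ((contDiffAt_barrier hc hz₁).continuousAt.eventually_lt continuousAt_const hz).filter_mono
      nhdsWithin_le_nhds, self_mem_nhdsWithin] with z' hz'₁ hz'T hz' hmem
  exact (mem_barrierRegion_iff hc hz'₁).2 ⟨⟨hmem.1.1, le_of_lt hz'T⟩, le_of_lt hz'⟩

lemma two_mul_le_inv_of_mul_le_one (hA : 0 ≤ A) (hc : 0 < c) (hct : 2 * A * (c * (T' - t₁)) ≤ 1)
    {t : ℝ} (ht₁ : t₁ < t) (htT : t ≤ T') : 2 * A ≤ (c * (t - t₁))⁻¹ := by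
  rw [← one_div, le_div_iff₀ (mul_pos hc (sub_pos.2 ht₁))]
  refine le_trans ?_ hct
  gcongr

lemma ne_and_barrier_lt_exp {w₁ w₂ : ℝ → Eucl n → ℝ} {B θ : ℝ} (hθ : 0 < θ) (hA : 0 ≤ A)
    (hl : 0 < l) (hexponent : 2 * A ≤ (c * (z.1 - t₁))⁻¹)
    (hw₁ : |w₁ z.1 z.2| ≤ B * radialProfile A z.2)
    (hw₂ : |w₂ z.1 z.2| ≤ B * radialProfile A z.2) (hBl : B ^ 2 / θ ^ 2 ≤ l)
    (hterm : w₁ T' z.2 ≤ w₂ T' z.2)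
    (hγ : -θ ≤ w₁ z.1 z.2 - θ * barrier c t₁ z - (w₂ z.1 z.2 + θ * barrier c t₁ z)) :
    z.1 ≠ T' ∧ barrier c t₁ z < Real.exp l := by
  constructor
  · rintro rfl
    have hχ : 1 ≤ barrier c t₁ z :=
      one_le_radialProfile ((mul_nonneg zero_le_two hA).trans hexponent) z.2
    linarith [mul_le_mul_of_nonneg_left hχ hθ.le]
  · have hgap : w₁ z.1 z.2 - w₂ z.1 z.2 ≤ B ^ 2 / θ + θ * barrier c t₁ z :=
      sub_le_add_mul_radialProfile hθ hexponent hw₁ hw₂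
    have hχ : θ * barrier c t₁ z ≤ θ * (B ^ 2 / θ ^ 2 + 1) := by
      have : θ * (B ^ 2 / θ ^ 2 + 1) = B ^ 2 / θ + θ := by field_simp
      linarith
    linarith [le_of_mul_le_mul_left hχ hθ, Real.add_one_lt_exp hl.ne']

end LogarithmicGrowth

section Comparison

open Filter Topology

variable {n d : ℕ} {U V : Type*} [TopologicalSpace U] [CompactSpace U] [TopologicalSpace V]
  [CompactSpace V] {T C : ℝ} {b : ℝ → Eucl n → U → V → Eucl n}
  {σ : ℝ → Eucl n → U → V → Matrix (Fin n) (Fin d) ℝ}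
  {f : ℝ → Eucl n → ℝ → Eucl d → U → V → ℝ}

namespace RegularCoefficients

variable [Nonempty U] [Nonempty V] {w₁ w₂ : ℝ → Eucl n → ℝ}

section MaximumPrinciple

variable {χ : ℝ × Eucl n → ℝ} {K : Set (ℝ × Eucl n)} {θ γ : ℝ}

lemma sub_barrier_ne_add_barrier (H : RegularCoefficients T C b σ f)
    (hw₁ : IsTouchingSubsolution T (lowerHamiltonian b σ f) w₁)
    (hw₂ : IsTouchingSupersolution T (lowerHamiltonian b σ f) w₂) (hK : IsCompact K)
    (hKT : K ⊆ Set.Icc 0 T ×ˢ Set.univ) (hw₁K : ContinuousOn (fun z => w₁ z.1 z.2) K)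
    (hw₂K : ContinuousOn (fun z => w₂ z.1 z.2) K) (hχK : ContinuousOn χ K)
    (hχ₁ : ∀ z ∈ K, 1 ≤ χ z) (hχ : ∀ z ∈ K, IsStrictBarrierAt C b σ χ z) (hθ : 0 < θ)
    (hγ : 0 < γ)
    (hinterior : ∀ z ∈ K, -γ ≤ w₁ z.1 z.2 - θ * χ z - (w₂ z.1 z.2 + θ * χ z) →
      z.1 < T ∧ K ∈ 𝓝[Set.Icc 0 T ×ˢ Set.univ] z)
    (hle : ∀ z ∈ K, w₁ z.1 z.2 - θ * χ z ≤ w₂ z.1 z.2 + θ * χ z) {z₀ : ℝ × Eucl n}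
    (hz₀ : z₀ ∈ K) : w₁ z₀.1 z₀.2 - θ * χ z₀ ≠ w₂ z₀.1 z₀.2 + θ * χ z₀ := by
  intro hcontact
  obtain ⟨κ, hκ, hκ₁, hκθ⟩ :=
    exists_pos_le_and_mul_le (lt_min one_pos hγ) hθ (2 * (C + 1) ^ 2 + 2 * C + 2)
  obtain ⟨ξ, hξ, η, hη, hsum⟩ := H.barrier_add_le_of_contact hw₁ hw₂ hK hKT hw₁K hw₂K hχK
    (fun z hz => zero_le_one.trans (hχ₁ z hz)) hχ hθ.le hκ (hκ₁.trans (min_le_left _ _))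
    (fun z hz hκz => hinterior z hz
      ((neg_le_neg (hκ₁.trans (min_le_right _ _))).trans hκz)) hle hz₀ hcontact
  have hlower : θ * (1 + 1) ≤ θ * (χ ξ + χ η) := by
    gcongr
    exacts [hχ₁ ξ hξ, hχ₁ η hη]
  linarith

lemma sub_barrier_le_add_barrier (H : RegularCoefficients T C b σ f)
    (hw₁ : IsTouchingSubsolution T (lowerHamiltonian b σ f) w₁)
    (hw₂ : IsTouchingSupersolution T (lowerHamiltonian b σ f) w₂) (hK : IsCompact K)
    (hKT : K ⊆ Set.Icc 0 T ×ˢ Set.univ) (hw₁K : ContinuousOn (fun z => w₁ z.1 z.2) K)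
    (hw₂K : ContinuousOn (fun z => w₂ z.1 z.2) K) (hχK : ContinuousOn χ K)
    (hχ₁ : ∀ z ∈ K, 1 ≤ χ z) (hχ : ∀ z ∈ K, IsStrictBarrierAt C b σ χ z) (hθ : 0 < θ)
    (hγ : 0 < γ)
    (hinterior : ∀ z ∈ K, -γ ≤ w₁ z.1 z.2 - θ * χ z - (w₂ z.1 z.2 + θ * χ z) →
      z.1 < T ∧ K ∈ 𝓝[Set.Icc 0 T ×ˢ Set.univ] z) {z : ℝ × Eucl n} (hz : z ∈ K) :
    w₁ z.1 z.2 - θ * χ z ≤ w₂ z.1 z.2 + θ * χ z := by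
  have hpos {z} (hz : z ∈ K) : 0 < 2 * χ z := by linarith [hχ₁ z hz]
  obtain ⟨z₀, hz₀, hmax⟩ := hK.exists_isMaxOn ⟨z, hz⟩
    ((hw₁K.sub hw₂K).div (hχK.const_mul 2) fun z hz => (hpos hz).ne')
  -- Increasing `θ` to the largest value of `(w₁ - w₂) / (2χ)` produces a contact point.
  set θ₀ := (w₁ z₀.1 z₀.2 - w₂ z₀.1 z₀.2) / (2 * χ z₀)
  have hle {z} (hz : z ∈ K) : w₁ z.1 z.2 - w₂ z.1 z.2 ≤ θ₀ * (2 * χ z) :=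
    (div_le_iff₀ (hpos hz)).1 (hmax hz)
  have hcontact : w₁ z₀.1 z₀.2 - w₂ z₀.1 z₀.2 = θ₀ * (2 * χ z₀) :=
    (div_mul_cancel₀ _ (hpos hz₀).ne').symm
  by_contra! hlt
  have hθ₀ : θ < θ₀ :=
    lt_of_mul_lt_mul_right (by linarith [hle hz] : θ * (2 * χ z) < θ₀ * (2 * χ z)) (hpos hz).le
  refine H.sub_barrier_ne_add_barrier hw₁ hw₂ hK hKT hw₁K hw₂K hχK hχ₁ hχ (hθ.trans hθ₀) hγ
    (fun z hz hγz => hinterior z hz ?_) (fun z hz => ?_) hz₀ ?_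
  · linarith [mul_le_mul_of_nonneg_right hθ₀.le (hpos hz).le]
  · linarith [hle hz]
  · linarith

end MaximumPrinciple

variable {A B C₀ c t₁ T' θ : ℝ}

lemma sub_mul_barrier_le (H : RegularCoefficients T C b σ f)
    (hw₁ : IsTouchingSubsolution T (lowerHamiltonian b σ f) w₁)
    (hw₂ : IsTouchingSupersolution T (lowerHamiltonian b σ f) w₂)
    (hcont₁ : ContinuousOn (fun z : ℝ × Eucl n => w₁ z.1 z.2) (Set.Icc 0 T ×ˢ Set.univ))
    (hcont₂ : ContinuousOn (fun z : ℝ × Eucl n => w₂ z.1 z.2) (Set.Icc 0 T ×ˢ Set.univ))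
    (hgrowth : ∀ t ∈ Set.Icc 0 T, ∀ x,
      |w₁ t x| ≤ B * radialProfile A x ∧ |w₂ t x| ≤ B * radialProfile A x)
    (hC₀ : 0 ≤ C₀) (hcoeff : ∀ t ∈ Set.Icc 0 T, ∀ x u v,
      ‖b t x u v‖ ≤ C₀ * (1 + ‖x‖) ∧ ‖σ t x u v‖ ≤ C₀ * (1 + ‖x‖))
    (hA : 1 ≤ A) (hc : 6 * C₀ ^ 2 + 4 * C₀ + 4 * C * C₀ + (C + 1) ≤ c) (hT' : T' ≤ T)
    (hct : 2 * A * (c * (T' - t₁)) ≤ 1) (hterm : ∀ x, w₁ T' x ≤ w₂ T' x) (hθ : 0 < θ)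
    {z : ℝ × Eucl n} (hz : z.1 ∈ Set.Icc 0 T') (hz₁ : t₁ < z.1) :
    w₁ z.1 z.2 - θ * barrier c t₁ z ≤ w₂ z.1 z.2 + θ * barrier c t₁ z := by
  have hC := H.nonneg
  have hc0 : 0 < c := lt_of_lt_of_le (by positivity) hc
  set l := B ^ 2 / θ ^ 2 + barrier c t₁ z
  have hBl : B ^ 2 / θ ^ 2 ≤ l := le_add_of_nonneg_right (Real.exp_pos _).le
  have hzl : barrier c t₁ z ≤ l := le_add_of_nonneg_left (by positivity)
  have hl : 0 < l := (Real.exp_pos _).trans_le hzl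
  have hKT : barrierRegion n c t₁ T' l ⊆ Set.Icc 0 T ×ˢ Set.univ :=
    fun z hz => ⟨⟨hz.1.1, hz.1.2.trans hT'⟩, Set.mem_univ _⟩
  have hexponent {z} (hz : z ∈ barrierRegion n c t₁ T' l) : 2 * A ≤ (c * (z.1 - t₁))⁻¹ :=
    two_mul_le_inv_of_mul_le_one (zero_le_one.trans hA) hc0 hct
      (lt_of_mem_barrierRegion hc0.le hl.le hz) hz.1.2
  have hone {z} (hz : z ∈ barrierRegion n c t₁ T' l) : 1 ≤ (c * (z.1 - t₁))⁻¹ :=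
    le_trans (by linarith) (hexponent hz)
  refine H.sub_barrier_le_add_barrier hw₁ hw₂ (isCompact_barrierRegion hc0.le hl.le) hKT
    (hcont₁.mono hKT) (hcont₂.mono hKT) (continuousOn_barrier hc0 hl.le)
    (fun z hz => one_le_radialProfile (zero_le_one.trans (hone hz)) z.2)
    (fun z hz => isStrictBarrierAt_barrier hC₀ hC hc (hone hz)
      (fun u v => (hcoeff _ (hKT hz).1 z.2 u v).1) fun u v => (hcoeff _ (hKT hz).1 z.2 u v).2)
    hθ hθ (fun z hz hγ => ?_)
    ((mem_barrierRegion_iff hc0 hz₁).2 ⟨hz, hzl.trans ((le_add_of_nonneg_right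
      zero_le_one).trans (Real.add_one_le_exp l))⟩)
  obtain ⟨hbound₁, hbound₂⟩ := hgrowth z.1 (hKT hz).1 z.2
  obtain ⟨hne, hlt⟩ := ne_and_barrier_lt_exp hθ (zero_le_one.trans hA) hl (hexponent hz)
    hbound₁ hbound₂ hBl (hterm z.2) hγ
  have hzT := lt_of_le_of_ne hz.1.2 hne
  exact ⟨hzT.trans_le hT',
    barrierRegion_mem_nhdsWithin hc0 (lt_of_mem_barrierRegion hc0.le hl.le hz) hzT hlt⟩

lemma exists_le_of_terminal_le (H : RegularCoefficients T C b σ f)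
    (hw₁ : IsTouchingSubsolution T (lowerHamiltonian b σ f) w₁)
    (hw₂ : IsTouchingSupersolution T (lowerHamiltonian b σ f) w₂)
    (hΘ₁ : MemTheta T w₁) (hΘ₂ : MemTheta T w₂) :
    ∃ τ > 0, ∀ T' ≤ T, (∀ x, w₁ T' x ≤ w₂ T' x) →
      ∀ t ∈ Set.Icc 0 T', T' - τ < t → ∀ x, w₁ t x ≤ w₂ t x := by
  obtain ⟨C₀, hC₀, hcoeff⟩ := H.exists_coefficient_growth
  obtain ⟨A, hA, B, hgrowth⟩ := hΘ₁.exists_common_abs_le hΘ₂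
  have hC := H.nonneg
  set c := 6 * C₀ ^ 2 + 4 * C₀ + 4 * C * C₀ + (C + 1)
  have hc : 0 < c := by positivity
  refine ⟨(2 * A * c)⁻¹, by positivity, fun T' hT' hterm t ht htτ x => ?_⟩
  have hct : 2 * A * (c * (T' - (T' - (2 * A * c)⁻¹))) ≤ 1 := by
    rw [sub_sub_cancel, ← mul_assoc, mul_inv_cancel₀ (mul_pos (by linarith) hc).ne']
  refine le_of_forall_pos_le_add fun ε hε => ?_
  set χ := barrier c (T' - (2 * A * c)⁻¹) (t, x)
  have hχ : 0 < χ := Real.exp_pos _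
  have hle := H.sub_mul_barrier_le hw₁ hw₂ hΘ₁.1 hΘ₂.1 hgrowth hC₀ hcoeff hA le_rfl hT' hct
    hterm (by positivity : 0 < ε / (2 * χ)) (z := (t, x)) ht htτ
  have hε : ε / (2 * χ) * χ = ε / 2 := by field_simp
  dsimp only at hle
  linarith

end RegularCoefficients

lemma forall_mem_Icc_of_backward_step {P : ℝ → Prop} {τ : ℝ} (hτ : 0 < τ) (hT : P T)
    (hstep : ∀ T' ≤ T, P T' → ∀ t ∈ Set.Icc 0 T', T' - τ < t → P t) :
    ∀ t ∈ Set.Icc 0 T, P t := by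
  have hiter (k : ℕ) : ∀ t ∈ Set.Icc 0 T, T - k * (τ / 2) ≤ t → P t := by
    induction k with
    | zero =>
      intro t ht htT
      rwa [le_antisymm ht.2 (by simpa using htT)]
    | succ k ih =>
      intro t ht htT
      rcases le_total (T - k * (τ / 2)) t with h | h
      · exact ih t ht h
      · have hk : 0 ≤ (k : ℝ) * (τ / 2) := by positivity
        push_cast at htT
        exact hstep _ (by linarith) (ih _ ⟨ht.1.trans h, by linarith⟩ le_rfl) t ⟨ht.1, h⟩
          (by linarith)
  intro t ht
  obtain ⟨k, hk⟩ := exists_nat_ge (T / (τ / 2))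
  rw [div_le_iff₀ (half_pos hτ)] at hk
  exact hiter k t ht (by linarith [ht.1])

end Comparison

theorem comparison_viscosity_isaacs_lower_general {n d : ℕ} {T : ℝ} {U V : Type*}
    [TopologicalSpace U] [CompactSpace U] [Nonempty U]
    [TopologicalSpace V] [CompactSpace V] [Nonempty V]
    (b : ℝ → Eucl n → U → V → Eucl n)
    (σ : ℝ → Eucl n → U → V → Matrix (Fin n) (Fin d) ℝ)
    (f : ℝ → Eucl n → ℝ → Eucl d → U → V → ℝ)
    (hb_cont : ∀ x : Eucl n, ContinuousOn (fun q : ℝ × U × V => b q.1 x q.2.1 q.2.2)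
      (Set.Icc 0 T ×ˢ Set.univ))
    (hσ_cont : ∀ x : Eucl n, ContinuousOn (fun q : ℝ × U × V => σ q.1 x q.2.1 q.2.2)
      (Set.Icc 0 T ×ˢ Set.univ))
    (hbσ_lip : ∃ C > 0, ∀ t ∈ Set.Icc 0 T, ∀ x x' u v,
      ‖b t x u v - b t x' u v‖ + ‖σ t x u v - σ t x' u v‖ ≤ C * ‖x - x'‖)
    (hf_cont : ∀ x y z, ContinuousOn (fun q : ℝ × U × V => f q.1 x y z q.2.1 q.2.2)
      (Set.Icc 0 T ×ˢ Set.univ))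
    (hf_lip : ∃ C > 0, ∀ t ∈ Set.Icc 0 T, ∀ x x' y y' z z' u v,
      |f t x y z u v - f t x' y' z' u v| ≤ C * (‖x - x'‖ + |y - y'| + ‖z - z'‖))
    (u₁ u₂ : ℝ → Eucl n → ℝ) (hu₁Θ : MemTheta T u₁) (hu₂Θ : MemTheta T u₂)
    (hsub : IsTouchingSubsolution T (lowerHamiltonian b σ f) u₁)
    (hsuper : IsTouchingSupersolution T (lowerHamiltonian b σ f) u₂)
    (hterm : ∀ x, u₁ T x ≤ u₂ T x) :
    ∀ t ∈ Set.Icc 0 T, ∀ x, u₁ t x ≤ u₂ t x := by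
  obtain ⟨C, H⟩ := exists_regularCoefficients hb_cont hσ_cont hbσ_lip hf_cont hf_lip
  obtain ⟨τ, hτ, hstep⟩ := H.exists_le_of_terminal_le hsub hsuper hu₁Θ hu₂Θ
  exact forall_mem_Icc_of_backward_step hτ hterm hstep

/-- **Theorem 6.1 (comparison).** A viscosity subsolution `u₁ ∈ Θ` of the lower Isaacs
equation is dominated by any viscosity supersolution `u₂ ∈ Θ`. -/
theorem comparison_viscosity_isaacs_lower
    {n d : ℕ} (hn : 1 ≤ n) (hd : 1 ≤ d) {T : ℝ} (hT : 0 < T)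
    {U V : Type*} [MetricSpace U] [CompactSpace U] [Nonempty U]
    [MetricSpace V] [CompactSpace V] [Nonempty V]
    (b : ℝ → Eucl n → U → V → Eucl n)
    (σ : ℝ → Eucl n → U → V → Matrix (Fin n) (Fin d) ℝ)
    (f : ℝ → Eucl n → ℝ → Eucl d → U → V → ℝ)
    (Φ : Eucl n → ℝ)
    -- (H4.1)(i): for fixed `x`, `b(·,x,·,·)` and `σ(·,x,·,·)` are continuous in `(t,u,v)`
    (hb_cont : ∀ x : Eucl n, ContinuousOn
      (fun q : ℝ × U × V => b q.1 x q.2.1 q.2.2)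
      (Set.Icc (0 : ℝ) T ×ˢ (Set.univ : Set (U × V))))
    (hσ_cont : ∀ x : Eucl n, ContinuousOn
      (fun q : ℝ × U × V => σ q.1 x q.2.1 q.2.2)
      (Set.Icc (0 : ℝ) T ×ˢ (Set.univ : Set (U × V))))
    -- (H4.1)(ii): `b` and `σ` are Lipschitz in `x`, uniformly in `(t,u,v)`
    (hbσ_lip : ∃ C > (0 : ℝ), ∀ t ∈ Set.Icc (0 : ℝ) T, ∀ (x x' : Eucl n) (u : U) (v : V),
      ‖b t x u v - b t x' u v‖ + ‖σ t x u v - σ t x' u v‖ ≤ C * ‖x - x'‖)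
    -- (H4.2)(i): for fixed `(x,y,z)`, `f(·,x,y,z,·,·)` is continuous in `(t,u,v)`
    (hf_cont : ∀ (x : Eucl n) (y : ℝ) (z : Eucl d), ContinuousOn
      (fun q : ℝ × U × V => f q.1 x y z q.2.1 q.2.2)
      (Set.Icc (0 : ℝ) T ×ˢ (Set.univ : Set (U × V))))
    -- (H4.2): `f` is Lipschitz in `(x,y,z)`, uniformly in `(t,u,v)`
    (hf_lip : ∃ C > (0 : ℝ), ∀ t ∈ Set.Icc (0 : ℝ) T,
      ∀ (x x' : Eucl n) (y y' : ℝ) (z z' : Eucl d) (u : U) (v : V),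
      |f t x y z u v - f t x' y' z' u v| ≤ C * (‖x - x'‖ + |y - y'| + ‖z - z'‖))
    -- (H4.2): `Φ` is Lipschitz
    (hΦ_lip : ∃ C > (0 : ℝ), ∀ x x' : Eucl n, |Φ x - Φ x'| ≤ C * ‖x - x'‖)
    (u₁ u₂ : ℝ → Eucl n → ℝ)
    (hu₁Θ : MemTheta T u₁) (hu₂Θ : MemTheta T u₂)
    (hsub : IsViscositySubsolution T (lowerHamiltonian b σ f) Φ u₁)
    (hsuper : IsViscositySupersolution T (lowerHamiltonian b σ f) Φ u₂) :
    ∀ t ∈ Set.Icc (0 : ℝ) T, ∀ x : Eucl n, u₁ t x ≤ u₂ t x := by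
  exact comparison_viscosity_isaacs_lower_general b σ f hb_cont hσ_cont hbσ_lip hf_cont hf_lip
    u₁ u₂ hu₁Θ hu₂Θ hsub.isTouchingSubsolution hsuper.isTouchingSupersolution
    fun x => (hsub.1 x).trans (hsuper.1 x)
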